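/- Let $a$, $b$, $c$ be distinct primes with $a < b$, and suppose the equation $a^x + b^y = c^z$ has more than one solution in positive integers $(x,y,z)$. If $(a,b,c)$ is not one of $(2,3,5)$, $(2,3,11)$, $(2,5,3)$, $(2,7,3)$, $(3,5,2)$, $(3,13,2)$, then $c \equiv 5 \pmod{12}$ and the equation has exactly two solutions $(x_1,y_1,z_1)$ and $(x_2,y_2,z_2)$, which satisfy $2 \mid x_1$, $2 \mid y_1$, $z_1 = 1$, and $2 \nmid y_2$. -/

import Mathlib

/-!
Fix the parities of `x` and `y`. Pulling out squares, a solution of `a ^ x + b ^ y = c ^ z` becomes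
a primitive representation `c ^ z = A * u ^ 2 + B * v ^ 2` with `A ∈ {1, a}`, `B ∈ {1, b}` in which
`u` and `v` are prime powers; for `c = 2` the form represents `4 * 2 ^ (z - 2)` instead. All such
representations are odd powers of a smallest one, so two solutions in one parity class force the
cofactors of `u` and `v` in an odd power to be powers of `a` and `b`. Congruences and size estimates
leave only the exceptional triples. Solutions in different parity classes exclude each other by
`2`-adic valuations when `c = 2`. When `a = 2`, factoring differences of squares and the equation
`X ^ 2 + 2 = 3 * Y ^ 2` restrict the even values of `z`, and residues modulo `3` and `8` separate
the classes, except for `b = 3`, where Thue's lemma forces the exponents of `c` to be `1`. If `x`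
and `y` are even and `z > 1`, then `c = u ^ 2 + 4 * v ^ 2` and `c ^ z` comes from an odd power of
such a representation; comparing powers of `2` leaves only `2 ^ 2 + 11 ^ 2 = 5 ^ 3`.
-/

/-! ### Odd powers of `s + t` -/

/-- The coefficients `(S, T)` in `(s + t) ^ (2 * m + 1) = S * s + T * t`, where `s ^ 2 = A` and
`t ^ 2 = -B`. -/
def oddPow (A B : ℤ) : ℕ → ℤ × ℤ
  | 0 => (1, 1)
  | m + 1 => ((A - B) * (oddPow A B m).1 - 2 * B * (oddPow A B m).2,
      (A - B) * (oddPow A B m).2 + 2 * A * (oddPow A B m).1)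

section OddPow

variable (A B : ℤ) (m : ℕ)

theorem oddPow_swap :
    (oddPow B A m).1 = (-1) ^ m * (oddPow A B m).2 ∧
      (oddPow B A m).2 = (-1) ^ m * (oddPow A B m).1 := by
  induction m with
  | zero => simp [oddPow]
  | succ m ih =>
    simp only [oddPow, ih.1, ih.2, pow_succ]
    constructor <;> ring

theorem dvd_oddPow_sub :
    A ∣ (oddPow A B m).1 - (2 * m + 1) * (-B) ^ m ∧ A ∣ (oddPow A B m).2 - (-B) ^ m := by
  induction m with
  | zero => simp [oddPow]
  | succ m ih =>
    obtain ⟨⟨k, hk⟩, l, hl⟩ := ih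
    simp only [oddPow, pow_succ]
    push_cast
    exact ⟨⟨(oddPow A B m).1 - B * k - 2 * B * l, by linear_combination -B * hk - 2 * B * hl⟩,
      ⟨(oddPow A B m).2 - B * l + 2 * (oddPow A B m).1, by linear_combination -B * hl⟩⟩

theorem sq_dvd_three_mul_oddPow_sub :
    A ^ 2 ∣ 3 * (-B) * (oddPow A B m).1 - (3 * (2 * m + 1) * (-B) ^ (m + 1)
        + (2 * m + 1) * m * (2 * m - 1) * A * (-B) ^ m) ∧
      A ^ 2 ∣ (-B) * (oddPow A B m).2 - ((-B) ^ (m + 1) + (2 * m + 1) * m * A * (-B) ^ m) := by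
  induction m with
  | zero => simp [oddPow]
  | succ m ih =>
    obtain ⟨⟨k, hk⟩, l, hl⟩ := ih
    obtain ⟨j, hj⟩ := (dvd_oddPow_sub A B m).1
    simp only [oddPow]
    push_cast
    exact ⟨⟨(A - B) * k - 6 * B * l + ((2 * m + 1) * m * (2 * m - 1)) * (-B) ^ m, by
        linear_combination (A - B) * hk - 6 * B * hl⟩,
      ⟨(A - B) * l + (2 * m + 1) * m * (-B) ^ m - 2 * B * j, by
        linear_combination (A - B) * hl - 2 * A * B * hj⟩⟩

theorem oddPow_norm :
    A * (oddPow A B m).1 ^ 2 + B * (oddPow A B m).2 ^ 2 = (A + B) ^ (2 * m + 1) := by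
  induction m with
  | zero => simp [oddPow]
  | succ m ih =>
    rw [show 2 * (m + 1) + 1 = (2 * m + 1) + 2 by ring, pow_add, ← ih]
    simp only [oddPow]
    ring

theorem add_pow_eq_oddPow {R : Type*} [CommRing R] {s t : R} {a b : ℤ} (hs : s ^ 2 = a)
    (ht : t ^ 2 = -b) (u v : ℤ) (m : ℕ) :
    (u * s + v * t) ^ (2 * m + 1) =
      u * (oddPow (a * u ^ 2) (b * v ^ 2) m).1 * s +
        v * (oddPow (a * u ^ 2) (b * v ^ 2) m).2 * t := by
  induction m with
  | zero => simp [oddPow]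
  | succ m ih =>
    rw [show 2 * (m + 1) + 1 = (2 * m + 1) + 2 by ring, pow_add, ih]
    simp only [oddPow]
    push_cast
    generalize ((oddPow (a * u ^ 2) (b * v ^ 2) m).1 : R) = S
    generalize ((oddPow (a * u ^ 2) (b * v ^ 2) m).2 : R) = T
    rw [← hs, show (b : R) = -t ^ 2 by rw [ht]; ring]
    ring

/-- For `h = 2` this says that `((s + t) / 2) ^ (2 * m + 1)` is again of the form
`(P * s + Q * t) / 2`; the congruence `P ≡ -Q` is what makes the induction work. -/
theorem pow_dvd_oddPow {A B h N : ℤ} (hh : h ∣ 2) (hN : A + B = h ^ 2 * N) (m : ℕ) :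
    ∃ P Q : ℤ, (oddPow A B m).1 = h ^ (2 * m) * P ∧ (oddPow A B m).2 = h ^ (2 * m) * Q ∧
      h ∣ P + Q := by
  obtain ⟨e, he⟩ := hh
  induction m with
  | zero => exact ⟨1, 1, by simp [oddPow], by simp [oddPow], e, by linarith⟩
  | succ m ih =>
    obtain ⟨P, Q, hP, hQ, R, hR⟩ := ih
    refine ⟨N * P - e * B * R, e * A * R - N * Q, ?_, ?_,
      N * R - e * N * Q + 2 * N * R - e ^ 2 * B * R, ?_⟩
    · simp only [oddPow, hP, hQ]
      rw [show 2 * (m + 1) = 2 * m + 2 by ring, pow_add]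
      linear_combination (-2 * B * h ^ (2 * m)) * hR - h ^ (2 * m) * B * R * h * he +
        h ^ (2 * m) * P * hN
    · simp only [oddPow, hP, hQ]
      rw [show 2 * (m + 1) = 2 * m + 2 by ring, pow_add]
      linear_combination (2 * A * h ^ (2 * m)) * hR + h ^ (2 * m) * A * R * h * he -
        h ^ (2 * m) * Q * hN
    · obtain rfl : A = h ^ 2 * N - B := by linarith
      linear_combination N * hR - (h * N * R + N * Q + e * B * R) * he

end OddPow

/-! ### Representations of `h ^ 2 * c ^ n` by a binary form -/

/-- A positive form `a * u ^ 2 + b * v ^ 2` and a prime `c` not dividing `a * b`. The scale `h`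
handles `c = 2`, where the representations of interest are those of `4 * 2 ^ n` with `u` and `v`
odd. The bound `sq_lt` forces matching representations with the same exponent to agree up to
signs. -/
structure PrimeForm (a b c h : ℤ) : Prop where
  a_pos : 0 < a
  b_pos : 0 < b
  prime : Prime c
  c_pos : 0 < c
  not_dvd_a : ¬c ∣ a
  not_dvd_b : ¬c ∣ b
  scale : h = 1 ∧ c ≠ 2 ∨ h = 2 ∧ c = 2
  sq_lt : h ^ 2 < a * b

theorem mul_sq_ne_two {b : ℤ} (hb : ¬2 ∣ b) (v : ℤ) : b * v ^ 2 ≠ 2 := by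
  intro h
  rcases Int.even_or_odd' v with ⟨k, rfl | rfl⟩
  · have : 2 * (b * k ^ 2) = 1 := by linarith
    lia
  · exact hb ⟨1 - b * (2 * k ^ 2 + 2 * k), by linarith⟩

namespace PrimeForm

variable {a b c h : ℤ}

theorem swap (F : PrimeForm a b c h) : PrimeForm b a c h :=
  ⟨F.b_pos, F.a_pos, F.prime, F.c_pos, F.not_dvd_b, F.not_dvd_a, F.scale, mul_comm a b ▸ F.sq_lt⟩

theorem h_pos (F : PrimeForm a b c h) : 0 < h := by
  rcases F.scale with ⟨rfl, -⟩ | ⟨rfl, -⟩ <;> norm_num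

theorem one_lt (F : PrimeForm a b c h) : 1 < c :=
  lt_of_le_of_ne F.c_pos fun hc => F.prime.ne_one hc.symm

theorem exists_mul_eq_two (F : PrimeForm a b c h) : ∃ e, h * e = 2 ∧ ¬c ∣ e := by
  rcases F.scale with ⟨rfl, hc⟩ | ⟨rfl, rfl⟩
  · refine ⟨2, rfl, fun hd => hc ?_⟩
    have := Int.le_of_dvd two_pos hd
    have := F.one_lt
    lia
  · exact ⟨1, rfl, by decide⟩

theorem isCoprime_pow (F : PrimeForm a b c h) (k : ℕ) {w : ℤ} (hw : ¬c ∣ w) :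
    IsCoprime (c ^ k) w :=
  (F.prime.irreducible.coprime_iff_not_dvd.2 hw).pow_left

section Descent

variable {m n : ℕ} {u v : ℤ}

theorem dvd_right (F : PrimeForm a b c h) (hn : 0 < n)
    (huv : a * u ^ 2 + b * v ^ 2 = h ^ 2 * c ^ n) (hu : c ∣ u) : c ∣ v := by
  have hsum : c ∣ a * u ^ 2 + b * v ^ 2 := huv ▸ (dvd_pow_self c hn.ne').mul_left _
  have hbv : c ∣ b * v ^ 2 := (dvd_add_right ((dvd_pow hu two_ne_zero).mul_left a)).1 hsum
  exact F.prime.dvd_of_dvd_pow ((F.prime.dvd_or_dvd hbv).resolve_left F.not_dvd_b)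

theorem not_dvd_right (F : PrimeForm a b c h) (hn : 0 < n)
    (huv : a * u ^ 2 + b * v ^ 2 = h ^ 2 * c ^ n) (hu : ¬c ∣ u) : ¬c ∣ v :=
  fun hv => hu (F.swap.dvd_right hn (by linarith) hv)

theorem form_ne_two (F : PrimeForm a b 2 2) (u v : ℤ) : a * u ^ 2 + b * v ^ 2 ≠ 2 := by
  intro huv
  have ha := F.a_pos
  have hb := F.b_pos
  have hab := F.sq_lt
  by_cases hu : u = 0
  · exact mul_sq_ne_two F.not_dvd_b v (by simpa [hu] using huv)
  by_cases hv : v = 0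
  · exact mul_sq_ne_two F.not_dvd_a u (by simpa [hv] using huv)
  have hu' : 0 < u ^ 2 := by positivity
  have hv' : 0 < v ^ 2 := by positivity
  have ha1 : a ≤ 1 := by nlinarith
  have hb1 : b ≤ 1 := by nlinarith
  nlinarith

theorem mul_form_ne_sq (F : PrimeForm a b c h) (u v : ℤ) :
    c * (a * u ^ 2 + b * v ^ 2) ≠ h ^ 2 := by
  intro huv
  rcases F.scale with ⟨rfl, -⟩ | ⟨rfl, rfl⟩
  · exact F.prime.not_isUnit (isUnit_of_dvd_one ⟨_, (huv.trans (one_pow 2)).symm⟩)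
  · exact F.form_ne_two u v (by linarith)

theorem exists_div_of_dvd (F : PrimeForm a b c h) (hn : 0 < n)
    (huv : a * u ^ 2 + b * v ^ 2 = h ^ 2 * c ^ n) (hu : c ∣ u) :
    ∃ u' v' m, u = c * u' ∧ v = c * v' ∧ n = m + 2 ∧
      a * u' ^ 2 + b * v' ^ 2 = h ^ 2 * c ^ m := by
  obtain ⟨v', rfl⟩ := F.dvd_right hn huv hu
  obtain ⟨u', rfl⟩ := hu
  have hc : c ≠ 0 := F.prime.ne_zero
  have hn1 : n ≠ 1 := by
    rintro rfl
    refine F.mul_form_ne_sq u' v' (mul_left_cancel₀ hc ?_)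
    linear_combination huv
  obtain ⟨m, rfl⟩ := Nat.exists_eq_add_of_le' (show 2 ≤ n by lia)
  refine ⟨u', v', m, rfl, rfl, rfl, mul_left_cancel₀ (pow_ne_zero 2 hc) ?_⟩
  linear_combination huv

end Descent

section TwoRepresentations

variable {m n k l : ℕ} {u₁ v₁ u₂ v₂ y : ℤ}

theorem dvd_cross_products (F : PrimeForm a b c h) (hu₁ : ¬c ∣ u₁) (hv₁ : ¬c ∣ v₁) (hu₂ : ¬c ∣ u₂)
    (hv₂ : ¬c ∣ v₂) : h ∣ u₁ * v₂ - u₂ * v₁ ∧ h ∣ u₁ * v₂ + u₂ * v₁ := by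
  rcases F.scale with ⟨rfl, -⟩ | ⟨rfl, rfl⟩
  · exact ⟨one_dvd _, one_dvd _⟩
  · simp only [← even_iff_two_dvd, Int.not_even_iff_odd] at *
    exact ⟨(hu₁.mul hv₂).sub_odd (hu₂.mul hv₁), (hu₁.mul hv₂).add_odd (hu₂.mul hv₁)⟩

/-- `c ^ m` divides the product of the two cross products `u₁ * v₂ ± u₂ * v₁` up to the scale, but
`c` does not divide both of them; the sign of `v₁` selects the one it divides. -/
theorem exists_sign (F : PrimeForm a b c h) (hm : 0 < m) (hmn : m ≤ n)
    (h₁ : a * u₁ ^ 2 + b * v₁ ^ 2 = h ^ 2 * c ^ m) (h₂ : a * u₂ ^ 2 + b * v₂ ^ 2 = h ^ 2 * c ^ n)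
    (hu₁ : ¬c ∣ u₁) (hu₂ : ¬c ∣ u₂) :
    ∃ w y, w ^ 2 = v₁ ^ 2 ∧ u₁ * v₂ - u₂ * w = h * c ^ m * y := by
  have hv₂ := F.not_dvd_right (hm.trans_le hmn) h₂ hu₂
  obtain ⟨⟨X, hX⟩, Y, hY⟩ := F.dvd_cross_products hu₁ (F.not_dvd_right hm h₁ hu₁) hu₂ hv₂
  obtain ⟨e, he, hce⟩ := F.exists_mul_eq_two
  obtain ⟨k, rfl⟩ := Nat.exists_eq_add_of_le hmn
  have hprod : a * (X * Y) = c ^ m * (v₂ ^ 2 - c ^ k * v₁ ^ 2) := by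
    apply mul_left_cancel₀ (pow_ne_zero 2 F.h_pos.ne')
    calc h ^ 2 * (a * (X * Y)) = a * (h * X) * (h * Y) := by ring
      _ = h ^ 2 * (c ^ m * (v₂ ^ 2 - c ^ k * v₁ ^ 2)) := by
        rw [← hX, ← hY]
        linear_combination v₂ ^ 2 * h₁ - v₁ ^ 2 * h₂
  have hsum : X + Y = e * (u₁ * v₂) := by
    apply mul_left_cancel₀ F.h_pos.ne'
    linear_combination -hX - hY - u₁ * v₂ * he
  have hnot : ¬c ∣ X + Y := by
    rw [hsum, F.prime.dvd_mul, F.prime.dvd_mul]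
    tauto
  have hdvd : c ^ m ∣ X * Y := (F.isCoprime_pow m F.not_dvd_a).dvd_of_dvd_mul_left ⟨_, hprod⟩
  by_cases hcX : c ∣ X
  · have hcY : ¬c ∣ Y := fun hcY => hnot (dvd_add hcX hcY)
    obtain ⟨y, hy⟩ := (F.isCoprime_pow m hcY).dvd_of_dvd_mul_right hdvd
    exact ⟨v₁, y, rfl, by rw [hX, hy, mul_assoc]⟩
  · obtain ⟨y, hy⟩ := (F.isCoprime_pow m hcX).dvd_of_dvd_mul_left hdvd
    exact ⟨-v₁, y, neg_sq v₁, by linear_combination hY + h * hy⟩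

theorem pow_dvd_quotient (F : PrimeForm a b c h) {e : ℤ} (he : h * e = 2) (hkm : k ≤ m)
    (hkl : k ≤ l) (h₁ : a * u₁ ^ 2 + b * v₁ ^ 2 = h ^ 2 * c ^ m)
    (h₂ : a * u₂ ^ 2 + b * v₂ ^ 2 = h ^ 2 * c ^ (m + l)) (hu₂ : ¬c ∣ u₂)
    (hy : u₁ * v₂ - u₂ * v₁ = h * c ^ m * y) : c ^ k ∣ u₂ + e * b * v₁ * y := by
  have hne : h ^ 2 * c ^ m ≠ 0 :=
    mul_ne_zero (pow_ne_zero 2 F.h_pos.ne') (pow_ne_zero m F.c_pos.ne')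
  have hcross : (u₁ * v₂) ^ 2 = (u₂ * v₁ + h * c ^ m * y) ^ 2 := by rw [← hy]; ring
  have hv₂ : v₂ ^ 2 = c ^ l * v₁ ^ 2 + e * a * y * u₂ * v₁ + a * c ^ m * y ^ 2 := by
    apply mul_left_cancel₀ hne
    linear_combination -v₂ ^ 2 * h₁ + a * hcross + v₁ ^ 2 * h₂ - (h * c ^ m * y * a * u₂ * v₁) * he
  have hmul : a * u₂ * (u₂ + e * b * v₁ * y) =
      h ^ 2 * c ^ (m + l) - c ^ l * (b * v₁ ^ 2) - c ^ m * (a * b * y ^ 2) := by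
    linear_combination h₂ - b * hv₂
  refine ((F.isCoprime_pow k F.not_dvd_a).mul_right
    (F.isCoprime_pow k hu₂)).dvd_of_dvd_mul_left (hmul ▸ ?_)
  exact dvd_sub (dvd_sub ((pow_dvd_pow c (by lia)).mul_left _) ((pow_dvd_pow c hkl).mul_right _))
    ((pow_dvd_pow c hkm).mul_right _)

/-- Up to the factor `c ^ k`, the representation `(U, V)` is the quotient of the second
representation by the square of the first. -/
theorem exists_quotient (F : PrimeForm a b c h) {e : ℤ} (he : h * e = 2) (hm : 0 < m) (hkm : k ≤ m)
    (hkl : k ≤ l) (h₁ : a * u₁ ^ 2 + b * v₁ ^ 2 = h ^ 2 * c ^ m)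
    (h₂ : a * u₂ ^ 2 + b * v₂ ^ 2 = h ^ 2 * c ^ (m + l)) (hu₂ : ¬c ∣ u₂)
    (hy : u₁ * v₂ - u₂ * v₁ = h * c ^ m * y) :
    ∃ U V, c ^ k * U = u₂ + e * b * v₁ * y ∧ c ^ k * V = -v₂ + e * a * u₁ * y ∧
      a * U ^ 2 + b * V ^ 2 = h ^ 2 * c ^ (m + l - 2 * k) := by
  have hv₂ := F.not_dvd_right (by lia) h₂ hu₂
  obtain ⟨U, hU⟩ := F.pow_dvd_quotient he hkm hkl h₁ h₂ hu₂ hy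
  obtain ⟨V, hV⟩ := F.swap.pow_dvd_quotient (u₁ := v₁) (u₂ := v₂) (v₁ := u₁) (v₂ := u₂) (y := -y)
    he hkm hkl (by linarith) (by linarith) hv₂ (by linarith)
  refine ⟨U, -V, hU.symm, by linear_combination hV, ?_⟩
  have hpow : c ^ (m + l) = (c ^ k) ^ 2 * c ^ (m + l - 2 * k) := by
    rw [← pow_mul, ← pow_add]
    congr 1
    lia
  apply mul_left_cancel₀ (pow_ne_zero 2 (pow_ne_zero k F.c_pos.ne'))
  calc (c ^ k) ^ 2 * (a * U ^ 2 + b * (-V) ^ 2)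
    _ = a * (c ^ k * U) ^ 2 + b * (c ^ k * V) ^ 2 := by ring
    _ = a * (u₂ + e * b * v₁ * y) ^ 2 + b * (v₂ + e * a * u₁ * (-y)) ^ 2 := by rw [hU, hV]
    _ = h ^ 2 * c ^ (m + l) := by
      linear_combination h₂ - 2 * e * a * b * y * hy + e ^ 2 * a * b * y ^ 2 * h₁ +
        (e * h * c ^ m * y ^ 2 * a * b) * he
    _ = (c ^ k) ^ 2 * (h ^ 2 * c ^ (m + l - 2 * k)) := by rw [hpow]; ring

theorem sq_eq_sq_of_same_exponent (F : PrimeForm a b c h)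
    (h₁ : a * u₁ ^ 2 + b * v₁ ^ 2 = h ^ 2 * c ^ m) (h₂ : a * u₂ ^ 2 + b * v₂ ^ 2 = h ^ 2 * c ^ m)
    (hy : u₁ * v₂ - u₂ * v₁ = h * c ^ m * y) : u₂ ^ 2 = u₁ ^ 2 ∧ v₂ ^ 2 = v₁ ^ 2 := by
  have hc := F.c_pos
  have hh := F.h_pos
  have hab := F.sq_lt
  have hbrahmagupta : (a * u₁ * u₂ + b * v₁ * v₂) ^ 2 + a * b * (h * c ^ m * y) ^ 2 =
      (h ^ 2 * c ^ m) ^ 2 := by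
    rw [← hy]
    linear_combination (h ^ 2 * c ^ m) * h₁ + (a * u₁ ^ 2 + b * v₁ ^ 2) * h₂
  have hy0 : y = 0 := by
    by_contra hne
    have hy2 : 0 < y ^ 2 := by positivity
    have hle : (h * c ^ m) ^ 2 * (a * b * y ^ 2) ≤ (h * c ^ m) ^ 2 * h ^ 2 := by
      nlinarith [sq_nonneg (a * u₁ * u₂ + b * v₁ * v₂)]
    have := le_of_mul_le_mul_left hle (by positivity)
    nlinarith [mul_pos F.a_pos F.b_pos]
  have hne : h ^ 2 * c ^ m ≠ 0 := by positivity
  have hcross : (u₁ * v₂) ^ 2 = (u₂ * v₁) ^ 2 := by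
    rw [sub_eq_zero.1 (hy.trans (by rw [hy0, mul_zero]))]
  constructor
  · apply mul_left_cancel₀ hne
    linear_combination -u₂ ^ 2 * h₁ + u₁ ^ 2 * h₂ - b * hcross
  · apply mul_left_cancel₀ hne
    linear_combination -v₂ ^ 2 * h₁ + v₁ ^ 2 * h₂ + a * hcross

end TwoRepresentations

end PrimeForm

/-! ### Representations as odd powers of a minimal one -/

/-- The exponents `n` for which a representation of `h ^ 2 * c ^ n` does not come from the identity
of the form class group: `n` is odd, or `h ^ 2` itself is not represented. -/
def NontrivialExponent (a b h : ℤ) (n : ℕ) : Prop :=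
  Odd n ∨ ∀ u v : ℤ, a * u ^ 2 + b * v ^ 2 ≠ h ^ 2

/-- Up to a power of `c` and a scale, `z` is an odd power of `± u₁ * s ± v₁ * t`. -/
def IsScaledOddPow (c h u₁ v₁ : ℤ) (s t z : ℂ) : Prop :=
  ∃ (j μ : ℕ) (u v : ℤ), u ^ 2 = u₁ ^ 2 ∧ v ^ 2 = v₁ ^ 2 ∧
    (h : ℂ) ^ (2 * μ) * z = (c : ℂ) ^ j * (u * s + v * t) ^ (2 * μ + 1)

theorem exists_linearIndependent_roots {a b : ℤ} (ha : 0 < a) (hb : 0 < b) :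
    ∃ s t : ℂ, s ^ 2 = a ∧ t ^ 2 = -b ∧
      ∀ u v u' v' : ℤ, u * s + v * t = u' * s + v' * t → u = u' ∧ v = v' := by
  have ha' : (0 : ℝ) < a := by exact_mod_cast ha
  have hb' : (0 : ℝ) < b := by exact_mod_cast hb
  have hsa : √(a : ℝ) ≠ 0 := (Real.sqrt_pos.2 ha').ne'
  have hsb : √(b : ℝ) ≠ 0 := (Real.sqrt_pos.2 hb').ne'
  refine ⟨(√(a : ℝ) : ℝ), (√(b : ℝ) : ℝ) * Complex.I, ?_, ?_, fun u v u' v' h => ⟨?_, ?_⟩⟩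
  · rw [← Complex.ofReal_pow, Real.sq_sqrt ha'.le, Complex.ofReal_intCast]
  · rw [mul_pow, ← Complex.ofReal_pow, Real.sq_sqrt hb'.le, Complex.I_sq, Complex.ofReal_intCast,
      mul_neg_one]
  · simpa [hsa] using congrArg Complex.re h
  · simpa [hsb] using congrArg Complex.im h

namespace NontrivialExponent

variable {a b h : ℤ} {k m n : ℕ}

theorem of_eq_add_two_mul (hn : NontrivialExponent a b h n) (hnk : n = k + 2 * m) :
    NontrivialExponent a b h k :=
  hn.imp_left fun hodd => by grind

theorem of_two_mul_eq_add (hn : NontrivialExponent a b h n) (hnk : 2 * m = n + k) :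
    NontrivialExponent a b h k :=
  hn.imp_left fun hodd => by grind

theorem pos {c u v : ℤ} (hn : NontrivialExponent a b h n)
    (huv : a * u ^ 2 + b * v ^ 2 = h ^ 2 * c ^ n) : 0 < n := by
  rcases hn with hodd | hrep
  · exact hodd.pos
  · refine Nat.pos_of_ne_zero ?_
    rintro rfl
    exact hrep u v (by simpa using huv)

end NontrivialExponent

namespace IsScaledOddPow

variable {c h u₁ v₁ w : ℤ} {s t z z' : ℂ}

theorem mul_left (hz : IsScaledOddPow c h u₁ v₁ s t z) : IsScaledOddPow c h u₁ v₁ s t (c * z) := by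
  obtain ⟨j, μ, u, v, hu, hv, hz⟩ := hz
  exact ⟨j + 1, μ, u, v, hu, hv, by linear_combination (c : ℂ) * hz⟩

/-- The factor `u₁ * s + w * t` is, up to sign, the base of the odd power or its conjugate. -/
theorem of_sq_mul (hh : h ≠ 0) {g : ℕ} (hnorm : u₁ ^ 2 * s ^ 2 - v₁ ^ 2 * t ^ 2 = h ^ 2 * c ^ g)
    (hw : w ^ 2 = v₁ ^ 2) (hz : IsScaledOddPow c h u₁ v₁ s t z')
    (hzz' : h ^ 2 * z = z' * (u₁ * s + w * t) ^ 2) : IsScaledOddPow c h u₁ v₁ s t z := by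
  obtain ⟨j, μ, u, v, hu, hv, hz⟩ := hz
  have hh2 : (h : ℂ) ^ 2 ≠ 0 := pow_ne_zero 2 (by exact_mod_cast hh)
  have huC : (u : ℂ) ^ 2 = u₁ ^ 2 := by exact_mod_cast hu
  have hvC : (v : ℂ) ^ 2 = v₁ ^ 2 := by exact_mod_cast hv
  have hwC : (w : ℂ) ^ 2 = v₁ ^ 2 := by exact_mod_cast hw
  have hsq : (u * v) ^ 2 = (u₁ * w) ^ 2 := by rw [mul_pow, mul_pow, hu, hv, hw]
  rcases sq_eq_sq_iff_eq_or_eq_neg.1 hsq with huv | huv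
  · have huvC : (u : ℂ) * v = u₁ * w := by exact_mod_cast huv
    have hbase : (u₁ * s + w * t) ^ 2 = (u * s + v * t) ^ 2 := by
      linear_combination -s ^ 2 * huC + t ^ 2 * (hwC - hvC) - 2 * s * t * huvC
    refine ⟨j, μ + 1, u, v, hu, hv, ?_⟩
    rw [hbase] at hzz'
    linear_combination (h : ℂ) ^ (2 * μ) * hzz' + (u * s + v * t) ^ 2 * hz
  · have huvC : (u : ℂ) * v = -(u₁ * w) := by exact_mod_cast huv
    have hbase : (u₁ * s + w * t) ^ 2 = (u * s - v * t) ^ 2 := by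
      linear_combination -s ^ 2 * huC + t ^ 2 * (hwC - hvC) + 2 * s * t * huvC
    have hconj : (u * s - v * t) * (u * s + v * t) = h ^ 2 * c ^ g := by
      linear_combination hnorm + s ^ 2 * huC - t ^ 2 * hvC
    rw [hbase] at hzz'
    rcases μ with _ | μ
    · refine ⟨j + g, 0, u, -v, hu, by rw [neg_sq, hv], mul_left_cancel₀ hh2 ?_⟩
      push_cast
      linear_combination hzz' + (u * s - v * t) ^ 2 * hz + c ^ j * (u * s - v * t) * hconj
    · refine ⟨j + 2 * g, μ, u, v, hu, hv, mul_left_cancel₀ (mul_ne_zero hh2 hh2) ?_⟩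
      linear_combination (h : ℂ) ^ (2 * μ) * h ^ 2 * hzz' + (u * s - v * t) ^ 2 * hz +
        c ^ j * (u * s + v * t) ^ (2 * μ + 1) *
          ((u * s - v * t) * (u * s + v * t) + h ^ 2 * c ^ g) * hconj

end IsScaledOddPow

theorem sq_mul_eq_mul_sq_of_quotient {a b c h e u₁ v₁ u₂ v₂ y U V : ℤ} {m : ℕ} {s t : ℂ}
    (hs : s ^ 2 = a) (ht : t ^ 2 = -b) (hc : c ≠ 0) (hh : h ≠ 0) (he : h * e = 2)
    (h₁ : a * u₁ ^ 2 + b * v₁ ^ 2 = h ^ 2 * c ^ m) (hy : u₁ * v₂ - u₂ * v₁ = h * c ^ m * y)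
    (hU : c ^ m * U = u₂ + e * b * v₁ * y) (hV : c ^ m * V = -v₂ + e * a * u₁ * y) :
    (h : ℂ) ^ 2 * (u₂ * s + v₂ * t) = (U * s + V * t) * (u₁ * s + v₁ * t) ^ 2 := by
  replace h₁ : (a : ℂ) * u₁ ^ 2 + b * v₁ ^ 2 = h ^ 2 * c ^ m := by exact_mod_cast h₁
  replace hy : (u₁ : ℂ) * v₂ - u₂ * v₁ = h * c ^ m * y := by exact_mod_cast hy
  replace hU : (c : ℂ) ^ m * U = u₂ + e * b * v₁ * y := by exact_mod_cast hU
  replace hV : (c : ℂ) ^ m * V = -v₂ + e * a * u₁ * y := by exact_mod_cast hV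
  replace he : (h : ℂ) * e = 2 := by exact_mod_cast he
  rw [← hs, show (b : ℂ) = -t ^ 2 by rw [ht]; ring] at *
  have hconj : ((u₂ : ℂ) * s + v₂ * t) * (u₁ * s - v₁ * t) ^ 2 =
      h ^ 2 * c ^ m * (c ^ m * U * s + c ^ m * V * t) := by
    rw [hU, hV]
    linear_combination s * (u₂ * h₁ - 2 * t ^ 2 * v₁ * hy + t ^ 2 * v₁ * y * h * c ^ m * he)
      + t * (-v₂ * h₁ + 2 * s ^ 2 * u₁ * hy - s ^ 2 * u₁ * y * h * c ^ m * he)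
  have hnorm : ((u₁ : ℂ) * s - v₁ * t) * (u₁ * s + v₁ * t) = h ^ 2 * c ^ m := by
    linear_combination h₁
  have hne : (h : ℂ) ^ 2 * (c ^ m) ^ 2 ≠ 0 := by exact_mod_cast (by positivity)
  apply mul_left_cancel₀ hne
  linear_combination (u₁ * s + v₁ * t) ^ 2 * hconj - (u₂ * s + v₂ * t) *
    ((u₁ * s - v₁ * t) * (u₁ * s + v₁ * t) + h ^ 2 * c ^ m) * hnorm

namespace PrimeForm

variable {a b c h : ℤ} {g n : ℕ} {u₁ v₁ : ℤ} {s t : ℂ}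

theorem isScaledOddPow_of_minimal (F : PrimeForm a b c h) (hs : s ^ 2 = a) (ht : t ^ 2 = -b)
    (hg : 0 < g) (h₁ : a * u₁ ^ 2 + b * v₁ ^ 2 = h ^ 2 * c ^ g) (hu₁ : ¬c ∣ u₁)
    (hmin : ∀ n u v, NontrivialExponent a b h n → a * u ^ 2 + b * v ^ 2 = h ^ 2 * c ^ n → g ≤ n)
    (n : ℕ) :
    ∀ u₂ v₂ : ℤ, NontrivialExponent a b h n → a * u₂ ^ 2 + b * v₂ ^ 2 = h ^ 2 * c ^ n →
      IsScaledOddPow c h u₁ v₁ s t (u₂ * s + v₂ * t) := by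
  induction n using Nat.strong_induction_on with
  | _ n ih =>
  intro u₂ v₂ hn h₂
  obtain ⟨l, rfl⟩ := Nat.exists_eq_add_of_le (hmin n u₂ v₂ hn h₂)
  by_cases hu₂ : c ∣ u₂
  · obtain ⟨u', v', m, rfl, rfl, hm, h'⟩ := F.exists_div_of_dvd (by lia) h₂ hu₂
    convert (ih m (by lia) u' v' (hn.of_eq_add_two_mul (m := 1) hm) h').mul_left using 1
    push_cast
    ring
  obtain ⟨w, y, hw, hy⟩ := F.exists_sign hg (by lia) h₁ h₂ hu₁ hu₂
  obtain ⟨e, he, -⟩ := F.exists_mul_eq_two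
  have h₁' : a * u₁ ^ 2 + b * w ^ 2 = h ^ 2 * c ^ g := by rw [hw, h₁]
  rcases Nat.eq_zero_or_pos l with rfl | hl
  · obtain ⟨hu, hv⟩ := F.sq_eq_sq_of_same_exponent h₁' h₂ hy
    exact ⟨0, 0, u₂, v₂, hu, hv.trans hw, by simp⟩
  rcases Nat.lt_or_ge l g with hlg | hgl
  · obtain ⟨U, V, -, -, hUV⟩ := F.exists_quotient he hg hlg.le le_rfl h₁' h₂ hu₂ hy
    have := hmin _ U V (hn.of_two_mul_eq_add (m := g) (by lia)) hUV
    lia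
  · obtain ⟨U, V, hU, hV, hUV⟩ := F.exists_quotient he hg le_rfl hgl h₁' h₂ hu₂ hy
    refine .of_sq_mul F.h_pos.ne' (g := g) ?_ hw
      (ih _ (by lia) U V (hn.of_eq_add_two_mul (m := g) (by lia)) hUV)
      (sq_mul_eq_mul_sq_of_quotient hs ht F.c_pos.ne' F.h_pos.ne' he h₁' hy hU hV)
    rw [hs, ht]
    exact_mod_cast (by linarith : u₁ ^ 2 * a - v₁ ^ 2 * -b = h ^ 2 * c ^ g)

theorem exists_oddPow (F : PrimeForm a b c h) (hs : s ^ 2 = a) (ht : t ^ 2 = -b) {u v : ℤ}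
    (huv : a * u ^ 2 + b * v ^ 2 = h ^ 2 * c ^ g) (m : ℕ) :
    ∃ P Q : ℤ, (oddPow (a * u ^ 2) (b * v ^ 2) m).1 = h ^ (2 * m) * P ∧
      (oddPow (a * u ^ 2) (b * v ^ 2) m).2 = h ^ (2 * m) * Q ∧
      (u * s + v * t) ^ (2 * m + 1) = h ^ (2 * m) * ((u * P : ℤ) * s + (v * Q : ℤ) * t) ∧
      a * (u * P) ^ 2 + b * (v * Q) ^ 2 = h ^ 2 * c ^ (g * (2 * m + 1)) := by
  obtain ⟨e, he, -⟩ := F.exists_mul_eq_two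
  obtain ⟨P, Q, hP, hQ, -⟩ := pow_dvd_oddPow ⟨e, he.symm⟩ huv m
  refine ⟨P, Q, hP, hQ, ?_, ?_⟩
  · rw [add_pow_eq_oddPow hs ht u v m, hP, hQ]
    push_cast
    ring
  · have hnorm := oddPow_norm (a * u ^ 2) (b * v ^ 2) m
    rw [hP, hQ, huv] at hnorm
    apply mul_left_cancel₀ (pow_ne_zero 2 (pow_ne_zero (2 * m) F.h_pos.ne'))
    linear_combination hnorm

theorem exists_minimal (F : PrimeForm a b c h) (hn : NontrivialExponent a b h n) {u v : ℤ}
    (huv : a * u ^ 2 + b * v ^ 2 = h ^ 2 * c ^ n) :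
    ∃ (g : ℕ) (u₁ v₁ : ℤ), 0 < g ∧ g ≤ n ∧ a * u₁ ^ 2 + b * v₁ ^ 2 = h ^ 2 * c ^ g ∧ ¬c ∣ u₁ ∧
      ∀ n u v, NontrivialExponent a b h n → a * u ^ 2 + b * v ^ 2 = h ^ 2 * c ^ n → g ≤ n := by
  classical
  have hex : ∃ g, ∃ u v : ℤ, NontrivialExponent a b h g ∧ a * u ^ 2 + b * v ^ 2 = h ^ 2 * c ^ g :=
    ⟨n, u, v, hn, huv⟩
  obtain ⟨u₁, v₁, hg, h₁⟩ := Nat.find_spec hex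
  refine ⟨Nat.find hex, u₁, v₁, hg.pos h₁, Nat.find_min' hex ⟨u, v, hn, huv⟩, h₁, fun hd => ?_,
    fun n u v hn huv => Nat.find_min' hex ⟨u, v, hn, huv⟩⟩
  obtain ⟨u', v', m, -, -, hm, h'⟩ := F.exists_div_of_dvd (hg.pos h₁) h₁ hd
  exact Nat.find_min hex (by lia) ⟨u', v', hg.of_eq_add_two_mul (m := 1) hm, h'⟩

theorem exists_odd_power (F : PrimeForm a b c h) (hs : s ^ 2 = a) (ht : t ^ 2 = -b)
    (hinj : ∀ u v u' v' : ℤ, u * s + v * t = u' * s + v' * t → u = u' ∧ v = v') {m : ℕ}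
    {u₀ v₀ u₂ v₂ : ℤ} (hn : NontrivialExponent a b h n)
    (h₂ : a * u₂ ^ 2 + b * v₂ ^ 2 = h ^ 2 * c ^ n) (hu₂ : ¬c ∣ u₂)
    (hm : NontrivialExponent a b h m) (h₀ : a * u₀ ^ 2 + b * v₀ ^ 2 = h ^ 2 * c ^ m) :
    ∃ (g μ : ℕ) (u v : ℤ), g ≤ m ∧ g * (2 * μ + 1) = n ∧ a * u ^ 2 + b * v ^ 2 = h ^ 2 * c ^ g ∧
      h ^ (2 * μ) * (u₂ * s + v₂ * t) = (u * s + v * t) ^ (2 * μ + 1) := by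
  obtain ⟨g, u₁, v₁, hg, hgm, h₁, hu₁, hmin⟩ := F.exists_minimal hm h₀
  obtain ⟨j, μ, u, v, hu, hv, hpow⟩ :=
    F.isScaledOddPow_of_minimal hs ht hg h₁ hu₁ hmin n u₂ v₂ hn h₂
  rw [← hu, ← hv] at h₁
  obtain ⟨P, Q, -, -, hPQ, hrep⟩ := F.exists_oddPow hs ht h₁ μ
  obtain ⟨hu₂P, hv₂Q⟩ := hinj u₂ v₂ (c ^ j * (u * P)) (c ^ j * (v * Q)) <| by
    have hhC : (h : ℂ) ≠ 0 := by exact_mod_cast F.h_pos.ne'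
    apply mul_left_cancel₀ (pow_ne_zero (2 * μ) hhC)
    rw [hpow, hPQ]
    push_cast
    ring
  obtain rfl : j = 0 := by
    by_contra hj
    exact hu₂ (hu₂P ▸ (dvd_pow_self c hj).mul_right _)
  rw [pow_zero, one_mul] at hu₂P hv₂Q hpow
  rw [hu₂P, hv₂Q, hrep] at h₂
  exact ⟨g, μ, u, v, hgm, pow_right_injective₀ F.c_pos F.one_lt.ne'
    (mul_left_cancel₀ (pow_ne_zero 2 F.h_pos.ne') h₂), h₁, hpow⟩

theorem exists_prime_power (F : PrimeForm a b c h) {m : ℕ} {u₀ v₀ u₂ v₂ : ℤ}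
    (hn : NontrivialExponent a b h n) (h₂ : a * u₂ ^ 2 + b * v₂ ^ 2 = h ^ 2 * c ^ n)
    (hu₂ : ¬c ∣ u₂) (hm : NontrivialExponent a b h m)
    (h₀ : a * u₀ ^ 2 + b * v₀ ^ 2 = h ^ 2 * c ^ m) (hmn : m < n) :
    ∃ (μ k : ℕ) (u v P Q : ℤ), Nat.Prime (2 * μ + 1) ∧ k * (2 * μ + 1) = n ∧
      a * u ^ 2 + b * v ^ 2 = h ^ 2 * c ^ k ∧ u₂ = u * P ∧ v₂ = v * Q ∧
      (oddPow (a * u ^ 2) (b * v ^ 2) μ).1 = h ^ (2 * μ) * P ∧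
      (oddPow (a * u ^ 2) (b * v ^ 2) μ).2 = h ^ (2 * μ) * Q := by
  obtain ⟨s, t, hs, ht, hinj⟩ := exists_linearIndependent_roots F.a_pos F.b_pos
  obtain ⟨g, μ, u, v, hgm, hg, h₁, hpow⟩ := F.exists_odd_power hs ht hinj hn h₂ hu₂ hm h₀
  have hμ : 2 * μ + 1 ≠ 1 := by
    intro hμ
    rw [hμ] at hg
    lia
  obtain ⟨r, hr, k, hk⟩ := Nat.exists_prime_and_dvd hμ
  obtain ⟨⟨ρ, rfl⟩, κ, rfl⟩ := Nat.odd_mul.1 (hk ▸ ⟨μ, rfl⟩ : Odd (r * k))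
  obtain ⟨P₁, Q₁, -, -, hpow₁, hrep₁⟩ := F.exists_oddPow hs ht h₁ κ
  obtain ⟨P₂, Q₂, hP₂, hQ₂, hpow₂, -⟩ := F.exists_oddPow hs ht hrep₁ ρ
  obtain ⟨hu₂', hv₂'⟩ := hinj u₂ v₂ (u * P₁ * P₂) (v * Q₁ * Q₂) <| by
    have hhC : (h : ℂ) ≠ 0 := by exact_mod_cast F.h_pos.ne'
    apply mul_left_cancel₀ (pow_ne_zero (2 * μ) hhC)
    have hexp : 2 * μ = 2 * κ * (2 * ρ + 1) + 2 * ρ := by linarith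
    rw [hpow, hk, mul_comm (2 * ρ + 1), pow_mul, hpow₁, mul_pow, hpow₂, ← mul_assoc, ← pow_mul,
      ← pow_add, ← hexp]
  exact ⟨ρ, g * (2 * κ + 1), u * P₁, v * Q₁, P₂, Q₂, hr, by rw [← hg, hk]; ring, hrep₁, hu₂',
    hv₂', hP₂, hQ₂⟩

end PrimeForm

/-! ### Odd powers whose cofactors are prime powers -/

section PowersOfTwoAndThree

theorem pow_mod_eq_pow_mod_period {a m T : ℕ} (hT : a ^ T % m = 1 % m) (n : ℕ) :
    a ^ n % m = a ^ (n % T) % m := by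
  have h := ((show a ^ T ≡ 1 [MOD m] from hT).pow (n / T)).mul_right (a ^ (n % T))
  rwa [← pow_mul, ← pow_add, Nat.div_add_mod, one_pow, one_mul] at h

theorem eq_one_or_three_of_three_pow_eq {w t : ℕ} (h : 3 ^ w = 2 ^ t + 1) : t = 1 ∨ t = 3 := by
  by_contra! hne
  have hw : 3 ^ w % 80 = 3 ^ (w % 4) % 80 := pow_mod_eq_pow_mod_period (by norm_num) w
  have hw4 : w % 4 < 4 := Nat.mod_lt _ (by norm_num)
  rcases (by lia : t = 0 ∨ t = 2 ∨ 4 ≤ t) with rfl | rfl | ht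
  · interval_cases w % 4 <;> lia
  · interval_cases w % 4 <;> lia
  · obtain ⟨s, rfl⟩ := Nat.exists_eq_add_of_le' ht
    have hs : 2 ^ s % 5 = 2 ^ (s % 4) % 5 := pow_mod_eq_pow_mod_period (by norm_num) s
    have hs4 : s % 4 < 4 := Nat.mod_lt _ (by norm_num)
    interval_cases s % 4 <;> interval_cases w % 4 <;> lia

theorem le_two_of_three_pow_add_one_eq {w t : ℕ} (h : 3 ^ w + 1 = 2 ^ t) : t ≤ 2 := by
  by_contra! ht
  obtain ⟨s, rfl⟩ := Nat.exists_eq_add_of_le' ht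
  have hw : 3 ^ w % 8 = 3 ^ (w % 2) % 8 := pow_mod_eq_pow_mod_period (by norm_num) w
  rcases Nat.mod_two_eq_zero_or_one w with h0 | h0 <;> rw [h0] at hw <;> lia

theorem two_mul_add_one_sq_lt_four_pow {μ : ℕ} (hμ : 3 ≤ μ) : (2 * μ + 1) ^ 2 < 4 ^ μ := by
  induction μ, hμ using Nat.le_induction with
  | base => norm_num
  | succ μ hμ ih =>
    rw [pow_succ 4]
    nlinarith

theorem eq_two_of_pow_le {N μ : ℕ} (hN : 2 ≤ N) (hμ : 2 ≤ μ)
    (h : N ^ (2 * μ) ≤ (2 * μ + 1) ^ 2) : N = 2 := by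
  have h4 : 4 ^ μ ≤ N ^ (2 * μ) := by
    rw [pow_mul]
    exact Nat.pow_le_pow_left (by nlinarith) μ
  obtain rfl : μ = 2 := by
    by_contra hne
    have := two_mul_add_one_sq_lt_four_pow (show 3 ≤ μ by lia)
    lia
  by_contra hne
  have := Nat.pow_le_pow_left (show 3 ≤ N by lia) (2 * 2)
  lia

end PowersOfTwoAndThree

section PrimePowerCofactors

variable {p i μ : ℕ} {A B P : ℤ}

theorem not_dvd_prime_pow {p q : ℕ} (hp : p.Prime) (hq : q.Prime) (hpq : p ≠ q) (n : ℕ) :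
    ¬(p : ℤ) ∣ (q : ℤ) ^ n := fun h =>
  hpq ((Nat.prime_dvd_prime_iff_eq hp hq).1 (hp.dvd_of_dvd_pow (by exact_mod_cast h)))

theorem exists_sq_eq_pow_sq (hp : p.Prime) (hP : P ∣ (p : ℤ) ^ i) :
    ∃ j, P ^ 2 = ((p : ℤ) ^ j) ^ 2 := by
  obtain ⟨j, -, hj⟩ := (dvd_prime_pow (Nat.prime_iff_prime_int.1 hp) i).1 hP
  exact ⟨j, sq_eq_sq_iff_eq_or_eq_neg.2 (Int.associated_iff.1 hj)⟩

theorem sq_eq_one_of_dvd_prime_pow (hp : p.Prime) (hP : P ∣ (p : ℤ) ^ i) (hpP : ¬(p : ℤ) ∣ P) :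
    P ^ 2 = 1 := by
  obtain ⟨j, hj⟩ := exists_sq_eq_pow_sq hp hP
  obtain rfl : j = 0 := by
    by_contra hj0
    refine hpP ((Nat.prime_iff_prime_int.1 hp).dvd_of_dvd_pow (n := 2) (hj ▸ ?_))
    exact dvd_pow (dvd_pow_self _ hj0) two_ne_zero
  simpa using hj

theorem not_dvd_oddPow {p : ℤ} (hp : Prime p) (hA : p ∣ A) (hB : ¬p ∣ B)
    (hμ : ¬p ∣ 2 * μ + 1) : ¬p ∣ (oddPow A B μ).1 := by
  intro hS
  have h : p ∣ (2 * μ + 1) * (-B) ^ μ := by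
    have := dvd_sub hS (hA.trans (dvd_oddPow_sub A B μ).1)
    rwa [sub_sub_cancel] at this
  rcases hp.dvd_or_dvd h with h | h
  · exact hμ h
  · exact hB ((dvd_neg).1 (hp.dvd_of_dvd_pow h))

theorem sq_not_dvd_oddPow {p : ℤ} (hp : Prime p) (hA : p ∣ A) (hB : ¬p ∣ B)
    (hμ : 2 * μ + 1 = p) (hp3 : ¬p ∣ 3) : ¬p ^ 2 ∣ (oddPow A B μ).1 := by
  intro hS
  obtain ⟨k, hk⟩ := (sq_dvd_three_mul_oddPow_sub A B μ).1
  rw [hμ] at hk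
  have h : p * p ∣ p * (3 * (-B) ^ (μ + 1)) := by
    have heq : p * (3 * (-B) ^ (μ + 1)) = 3 * (-B) * (oddPow A B μ).1 -
        p * A * (μ * (2 * μ - 1) * (-B) ^ μ) - A ^ 2 * k := by
      linear_combination -hk
    rw [heq, ← sq]
    refine dvd_sub (dvd_sub (hS.mul_left _) ?_) ((pow_dvd_pow_of_dvd hA 2).mul_right _)
    rw [sq]
    exact (mul_dvd_mul_left p hA).mul_right _
  rcases hp.dvd_or_dvd ((mul_dvd_mul_iff_left hp.ne_zero).1 h) with h | h
  · exact hp3 h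
  · exact hB (dvd_neg.1 (hp.dvd_of_dvd_pow h))

theorem sq_eq_one_of_dvd_oddPow (hp : p.Prime) (hA : (p : ℤ) ∣ A) (hB : ¬(p : ℤ) ∣ B)
    (hr : (2 * μ + 1).Prime) (hpμ : p ≠ 2 * μ + 1) (hPS : P ∣ (oddPow A B μ).1)
    (hP : P ∣ (p : ℤ) ^ i) : P ^ 2 = 1 := by
  have hpμ' : ¬(p : ℤ) ∣ 2 * μ + 1 := fun h =>
    hpμ ((Nat.prime_dvd_prime_iff_eq hp hr).1 (by exact_mod_cast h))
  exact sq_eq_one_of_dvd_prime_pow hp hP fun h =>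
    not_dvd_oddPow (Nat.prime_iff_prime_int.1 hp) hA hB hpμ' (h.trans hPS)

theorem sq_le_sq_of_dvd_oddPow (hp : p.Prime) (hA : (p : ℤ) ∣ A) (hB : ¬(p : ℤ) ∣ B)
    (hr : (2 * μ + 1).Prime) (hμ : 2 ≤ μ) (hPS : P ∣ (oddPow A B μ).1) (hP : P ∣ (p : ℤ) ^ i) :
    P ^ 2 ≤ (2 * μ + 1) ^ 2 := by
  have hpZ := Nat.prime_iff_prime_int.1 hp
  by_cases hpμ : p = 2 * μ + 1
  · obtain ⟨j, hj⟩ := exists_sq_eq_pow_sq hp hP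
    have hpμ' : 2 * (μ : ℤ) + 1 = p := by rw [hpμ]; push_cast; ring
    have hp3 : ¬(p : ℤ) ∣ 3 := fun h => by
      have := Int.le_of_dvd (by norm_num) h
      lia
    have hj1 : j ≤ 1 := by
      by_contra! hj2
      refine sq_not_dvd_oddPow hpZ hA hB hpμ' hp3 (dvd_trans ?_ hPS)
      exact (pow_dvd_pow _ hj2).trans ((Int.pow_dvd_pow_iff two_ne_zero).1 hj.symm.dvd)
    have hp1 : (1 : ℤ) ≤ p := by exact_mod_cast hp.one_le
    rw [hj, hpμ']
    gcongr
    exact (pow_le_pow_right₀ hp1 hj1).trans_eq (pow_one _)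
  · rw [sq_eq_one_of_dvd_oddPow hp hA hB hr hpμ hPS hP]
    exact one_le_pow₀ (by lia)

end PrimePowerCofactors

/-- The triples, up to exchanging the first two entries, with two solutions in one parity class:
`2 + 3 ^ 2 = 2 ^ 3 + 3 = 11`, `3 + 5 = 2 ^ 3` with `3 ^ 3 + 5 = 2 ^ 5`, and `3 + 13 = 2 ^ 4` with
`3 ^ 5 + 13 = 2 ^ 8`. -/
def IsExceptional (a b c : ℕ) : Prop :=
  (a, b, c) ∈ ({(2, 3, 11), (3, 2, 11), (3, 5, 2), (5, 3, 2), (3, 13, 2), (13, 3, 2)} :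
    Finset (ℕ × ℕ × ℕ))

theorem IsExceptional.swap {a b c : ℕ} (h : IsExceptional a b c) : IsExceptional b a c := by
  simp only [IsExceptional, Finset.mem_insert, Finset.mem_singleton, Prod.mk.injEq] at h ⊢
  tauto

/-- Distinct primes `a`, `b`, `c`, one of which is `2`, and the scale `h` of the associated
`PrimeForm`. -/
structure PrimeTriple (a b c : ℕ) (h : ℤ) : Prop where
  prime_a : a.Prime
  prime_b : b.Prime
  prime_c : c.Prime
  ne_ab : a ≠ b
  ne_ac : a ≠ c
  ne_bc : b ≠ c
  scale : h = 1 ∧ (a = 2 ∨ b = 2) ∨ h = 2 ∧ c = 2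

namespace PrimeTriple

variable {a b c x y k i j μ : ℕ} {h P Q : ℤ}

theorem swap (T : PrimeTriple a b c h) : PrimeTriple b a c h :=
  ⟨T.prime_b, T.prime_a, T.prime_c, T.ne_ab.symm, T.ne_bc, T.ne_ac, T.scale.imp_left fun ⟨h, h'⟩ =>
    ⟨h, h'.symm⟩⟩

theorem h_pos (T : PrimeTriple a b c h) : 0 < h := by
  rcases T.scale with ⟨rfl, -⟩ | ⟨rfl, -⟩ <;> norm_num

section CubicPower

theorem isExceptional_of_three_of_scale_one (hx : 0 < x)
    (hsum : (3 : ℤ) ^ x + 2 ^ y = c ^ k) (hT : Q = 3 * 3 ^ x - 2 ^ y) (hQ : Q = 1 ∨ Q = -1) :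
    IsExceptional 3 2 c := by
  have h3x : 3 ≤ 3 ^ x := Nat.le_self_pow hx.ne' 3
  rcases hQ with rfl | rfl
  · have hpow : 3 ^ (x + 1) = 2 ^ y + 1 := by
      rw [pow_succ]
      zify
      linarith
    obtain rfl | rfl := eq_one_or_three_of_three_pow_eq hpow
    · lia
    · have hck : c ^ k = 11 := by
        zify
        lia
      simp [IsExceptional, ((Nat.Prime.pow_eq_iff (by norm_num)).1 hck).1]
  · have hpow : 3 ^ (x + 1) + 1 = 2 ^ y := by
      rw [pow_succ]
      zify
      linarith
    have := Nat.pow_le_pow_right two_pos (le_two_of_three_pow_add_one_eq hpow)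
    lia

theorem isExceptional_of_three_of_scale_two (hx : 0 < x)
    (hsum : (3 : ℤ) ^ x + b ^ y = 4 * 2 ^ k) (hP : P ∣ 3 ^ i) (hS : 4 * P = 3 ^ x - 3 * b ^ y)
    (hT : 4 * Q = 3 * 3 ^ x - b ^ y) (hQ : Q = 1 ∨ Q = -1) : IsExceptional 3 b 2 := by
  have h3x : 3 ≤ 3 ^ x := Nat.le_self_pow hx.ne' 3
  rcases hQ with rfl | rfl
  · have hpow : 3 ^ x = 2 ^ k + 1 := by
      zify
      linarith
    obtain rfl | rfl := eq_one_or_three_of_three_pow_eq hpow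
    · have hby : b ^ y = 5 := by
        zify
        lia
      simp [IsExceptional, ((Nat.Prime.pow_eq_iff (by norm_num)).1 hby).1]
    · have hP15 : P = -15 := by lia
      have h5 : (5 : ℤ) ∣ 3 ^ i := dvd_trans (by norm_num [hP15]) hP
      exact absurd h5 (not_dvd_prime_pow (p := 5) (q := 3) (by norm_num) (by norm_num)
        (by norm_num) i)
  · have hpow : 3 ^ x + 1 = 2 ^ k := by
      zify
      linarith
    have hk2 := le_two_of_three_pow_add_one_eq hpow
    obtain rfl : k = 2 := by
      interval_cases k <;> lia
    have hby : b ^ y = 13 := by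
      zify
      lia
    simp [IsExceptional, ((Nat.Prime.pow_eq_iff (by norm_num)).1 hby).1]

theorem isExceptional_of_three (T : PrimeTriple 3 b c h) (hx : 0 < x) (hy : 0 < y)
    (hsum : (3 : ℤ) ^ x + b ^ y = h ^ 2 * c ^ k) (hP : P ∣ 3 ^ i) (hQ : Q ∣ (b : ℤ) ^ j)
    (hS : h ^ 2 * P = 3 ^ x - 3 * b ^ y) (hT : h ^ 2 * Q = 3 * 3 ^ x - b ^ y) :
    IsExceptional 3 b c := by
  have hbQ : ¬(b : ℤ) ∣ Q := fun hbQ => by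
    refine not_dvd_prime_pow T.prime_b T.prime_a T.ne_ab.symm (x + 1) ?_
    rw [show ((3 : ℕ) : ℤ) ^ (x + 1) = h ^ 2 * Q + b ^ y by
      rw [pow_succ]; push_cast; linarith]
    exact dvd_add (hbQ.mul_left _) (dvd_pow_self _ hy.ne')
  have hQ1 := sq_eq_one_iff.1 (sq_eq_one_of_dvd_prime_pow T.prime_b hQ hbQ)
  rcases T.scale with ⟨rfl, h3 | rfl⟩ | ⟨rfl, rfl⟩
  · norm_num at h3
  · exact isExceptional_of_three_of_scale_one hx (by simpa using hsum)
      (by simpa using hT) hQ1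
  · exact isExceptional_of_three_of_scale_two hx (by simpa using hsum) hP
      (by simpa using hS) (by simpa using hT) hQ1

end CubicPower

end PrimeTriple

section PrimePowerSums

variable {a b c x y k i j μ : ℕ} {h P Q : ℤ}

theorem dvd_oddPow_swap {A B : ℤ} (hQ : Q ∣ (oddPow A B μ).2) : Q ∣ (oddPow B A μ).1 := by
  rw [(oddPow_swap A B μ).1]
  exact hQ.mul_left _

theorem pow_le_of_oddPow_eq {A B C : ℤ} (hA : 0 < A) (hB : 0 < B) (hh : 0 < h)
    (hsum : A + B = h ^ 2 * C) (hS : h ^ (2 * μ) * P = (oddPow A B μ).1)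
    (hT : h ^ (2 * μ) * Q = (oddPow A B μ).2) (hP : P ^ 2 ≤ (2 * μ + 1) ^ 2)
    (hQ : Q ^ 2 ≤ (2 * μ + 1) ^ 2) : C ^ (2 * μ) ≤ (2 * μ + 1) ^ 2 := by
  have hnorm : A * P ^ 2 + B * Q ^ 2 = (A + B) * C ^ (2 * μ) := by
    refine mul_left_cancel₀ (pow_ne_zero 2 (pow_pos hh (2 * μ)).ne') ?_
    have hpow : (A + B) ^ (2 * μ + 1) = (h ^ (2 * μ)) ^ 2 * ((A + B) * C ^ (2 * μ)) := by
      rw [pow_succ, hsum, mul_pow, ← pow_mul]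
      ring
    have := oddPow_norm A B μ
    rw [← hS, ← hT, hpow] at this
    linear_combination this
  refine le_of_mul_le_mul_left ?_ (add_pos hA hB)
  rw [← hnorm, add_mul]
  gcongr

namespace PrimeTriple

theorem not_dvd_pow (T : PrimeTriple a b c h) (n : ℕ) : ¬(a : ℤ) ∣ (b : ℤ) ^ n :=
  not_dvd_prime_pow T.prime_a T.prime_b T.ne_ab n

theorem isExceptional_of_cubic (T : PrimeTriple a b c h) (hx : 0 < x) (hy : 0 < y) (hk : 0 < k)
    (hsum : (a : ℤ) ^ x + b ^ y = h ^ 2 * c ^ k) (hP : P ∣ (a : ℤ) ^ i) (hQ : Q ∣ (b : ℤ) ^ j)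
    (hS : h ^ 2 * P = (oddPow ((a : ℤ) ^ x) (b ^ y) 1).1)
    (hT : h ^ 2 * Q = (oddPow ((a : ℤ) ^ x) (b ^ y) 1).2) : IsExceptional a b c := by
  by_cases ha3 : a = 3
  · subst ha3
    simp only [oddPow] at hS hT
    exact T.isExceptional_of_three hx hy hsum hP hQ (by push_cast at hS; linarith)
      (by push_cast at hT; linarith)
  by_cases hb3 : b = 3
  · subst hb3
    simp only [oddPow] at hS hT
    exact (T.swap.isExceptional_of_three (P := -Q) (Q := -P) hy hx (by push_cast at hsum; linarith)
      (neg_dvd.2 hQ) (neg_dvd.2 hP) (by push_cast at hT; linarith)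
      (by push_cast at hS; linarith)).swap
  have hP1 := sq_eq_one_of_dvd_oddPow T.prime_a (dvd_pow_self _ hx.ne') (T.not_dvd_pow y)
    Nat.prime_three ha3 (Dvd.intro_left _ hS) hP
  have hQ1 := sq_eq_one_of_dvd_oddPow T.prime_b (dvd_pow_self _ hy.ne') (T.swap.not_dvd_pow x)
    Nat.prime_three hb3 (dvd_oddPow_swap (Dvd.intro_left _ hT)) hQ
  have hdiff : Q - P = 2 * (c : ℤ) ^ k := by
    refine mul_left_cancel₀ (pow_ne_zero 2 T.h_pos.ne') ?_
    simp only [oddPow] at hS hT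
    linear_combination hT - hS + 2 * hsum
  have hck : (2 : ℤ) ≤ c ^ k := by
    exact_mod_cast T.prime_c.two_le.trans (Nat.le_self_pow hk.ne' c)
  have : (Q - P) ^ 2 ≤ 4 := by nlinarith [sq_nonneg (Q + P)]
  nlinarith

theorem isExceptional_of_two_le (T : PrimeTriple a b c h) (hx : 0 < x) (hy : 0 < y) (hk : 0 < k)
    (hμ : 2 ≤ μ) (hr : (2 * μ + 1).Prime) (hsum : (a : ℤ) ^ x + b ^ y = h ^ 2 * c ^ k)
    (hP : P ∣ (a : ℤ) ^ i) (hQ : Q ∣ (b : ℤ) ^ j)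
    (hS : h ^ (2 * μ) * P = (oddPow ((a : ℤ) ^ x) (b ^ y) μ).1)
    (hT : h ^ (2 * μ) * Q = (oddPow ((a : ℤ) ^ x) (b ^ y) μ).2) : IsExceptional a b c := by
  have ha := T.prime_a.pos
  have hb := T.prime_b.pos
  have hPle := sq_le_sq_of_dvd_oddPow T.prime_a (dvd_pow_self _ hx.ne') (T.not_dvd_pow y)
    hr hμ (Dvd.intro_left _ hS) hP
  have hQle := sq_le_sq_of_dvd_oddPow T.prime_b (dvd_pow_self _ hy.ne') (T.swap.not_dvd_pow x)
    hr hμ (dvd_oddPow_swap (Dvd.intro_left _ hT)) hQ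
  have hle := pow_le_of_oddPow_eq (by positivity) (by positivity) T.h_pos hsum hS hT hPle hQle
  have hck : c ^ k = 2 :=
    eq_two_of_pow_le (T.prime_c.two_le.trans (Nat.le_self_pow hk.ne' c)) hμ (by exact_mod_cast hle)
  obtain ⟨rfl, rfl⟩ := (Nat.Prime.pow_eq_iff Nat.prime_two).1 hck
  rcases T.scale with ⟨-, rfl | rfl⟩ | ⟨rfl, -⟩
  · exact absurd rfl T.ne_ac
  · exact absurd rfl T.ne_bc
  have h8 : a ^ x + b ^ y = 8 := by
    norm_num at hsum
    exact_mod_cast hsum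
  have hax := Nat.le_self_pow hx.ne' a
  have hby := Nat.le_self_pow hy.ne' b
  have ha2 := T.prime_a.two_le
  have hb2 := T.prime_b.two_le
  have ha4 : a ≠ 4 := fun h4 => absurd (h4 ▸ T.prime_a) (by norm_num)
  have hb4 : b ≠ 4 := fun h4 => absurd (h4 ▸ T.prime_b) (by norm_num)
  have := T.ne_ab
  have := T.ne_ac
  have := T.ne_bc
  obtain ⟨rfl, rfl⟩ | ⟨rfl, rfl⟩ : a = 3 ∧ b = 5 ∨ a = 5 ∧ b = 3 := by lia
  all_goals simp [IsExceptional]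

theorem isExceptional_of_oddPow (T : PrimeTriple a b c h) (hx : 0 < x) (hy : 0 < y) (hk : 0 < k)
    (hr : (2 * μ + 1).Prime) (hsum : (a : ℤ) ^ x + b ^ y = h ^ 2 * c ^ k)
    (hP : P ∣ (a : ℤ) ^ i) (hQ : Q ∣ (b : ℤ) ^ j)
    (hS : h ^ (2 * μ) * P = (oddPow ((a : ℤ) ^ x) (b ^ y) μ).1)
    (hT : h ^ (2 * μ) * Q = (oddPow ((a : ℤ) ^ x) (b ^ y) μ).2) : IsExceptional a b c := by
  rcases (by lia : μ = 0 ∨ μ = 1 ∨ 2 ≤ μ) with rfl | rfl | hμ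
  · exact absurd hr Nat.not_prime_one
  · exact T.isExceptional_of_cubic hx hy hk hsum hP hQ hS hT
  · exact T.isExceptional_of_two_le hx hy hk hμ hr hsum hP hQ hS hT

end PrimeTriple

end PrimePowerSums

/-! ### Uniqueness in a parity class -/

theorem mul_sq_add_mul_sq_ne {A B N u v : ℤ} (hN : 0 < N) (hA : N < 2 * A) (hB : N < 2 * B)
    (hAN : A ≠ N) (hBN : B ≠ N) : A * u ^ 2 + B * v ^ 2 ≠ N := by
  intro h
  have sq_cases (w : ℤ) : w ^ 2 = 0 ∨ w ^ 2 = 1 ∨ 4 ≤ w ^ 2 := by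
    rcases (by lia : w = 0 ∨ w = 1 ∨ w = -1 ∨ 2 ≤ w ∨ w ≤ -2) with rfl | rfl | rfl | hw | hw
    · simp
    · simp
    · simp
    · exact Or.inr (Or.inr (by nlinarith))
    · exact Or.inr (Or.inr (by nlinarith))
  rcases sq_cases u with hu | hu | hu <;> rcases sq_cases v with hv | hv | hv <;>
    first
    | nlinarith
    | simp only [hu, hv] at h; lia

namespace PrimeTriple

variable {a b c x y k α β i j m n : ℕ} {h u v : ℤ}

theorem lt_pow (T : PrimeTriple a b c h) (hα : 0 < α) : h < (a : ℤ) ^ α := by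
  have haα : (a : ℤ) ≤ (a : ℤ) ^ α := by exact_mod_cast Nat.le_self_pow hα.ne' a
  have := T.prime_a.two_le
  have := T.ne_ac
  rcases T.scale with ⟨rfl, -⟩ | ⟨rfl, rfl⟩ <;> lia

theorem pow_ne_sq (T : PrimeTriple a b c h) (hα : 0 < α) : (a : ℤ) ^ α ≠ h ^ 2 := by
  intro heq
  rcases T.scale with ⟨rfl, -⟩ | ⟨rfl, rfl⟩
  · exact (T.lt_pow hα).ne' (by simpa using heq)
  · exact not_dvd_prime_pow T.prime_c T.prime_a T.ne_ac.symm α (heq ▸ dvd_pow_self _ two_ne_zero)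

theorem form_ne_sq (T : PrimeTriple a b c h) (hα : 0 < α) (hβ : 0 < β) (u v : ℤ) :
    (a : ℤ) ^ α * u ^ 2 + b ^ β * v ^ 2 ≠ h ^ 2 := by
  have hA := T.lt_pow hα
  have hB := T.swap.lt_pow hβ
  have hh : 0 < h ^ 2 ∧ h ^ 2 ≤ 2 * h := by rcases T.scale with ⟨rfl, -⟩ | ⟨rfl, -⟩ <;> norm_num
  exact mul_sq_add_mul_sq_ne hh.1 (by linarith) (by linarith) (T.pow_ne_sq hα)
    (T.swap.pow_ne_sq hβ)

theorem primeForm (T : PrimeTriple a b c h) (hα : 0 < α) (hβ : 0 < β) :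
    PrimeForm ((a : ℤ) ^ α) (b ^ β) c h where
  a_pos := T.h_pos.trans (T.lt_pow hα)
  b_pos := T.h_pos.trans (T.swap.lt_pow hβ)
  prime := Nat.prime_iff_prime_int.1 T.prime_c
  c_pos := mod_cast T.prime_c.pos
  not_dvd_a := not_dvd_prime_pow T.prime_c T.prime_a T.ne_ac.symm α
  not_dvd_b := not_dvd_prime_pow T.prime_c T.prime_b T.ne_bc.symm β
  scale := by
    have := T.ne_ac
    have := T.ne_bc
    have := T.scale
    lia
  sq_lt := by nlinarith [T.h_pos, T.lt_pow hα, T.swap.lt_pow hβ]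

theorem le_of_form_eq (T : PrimeTriple a b c h) (hT : ¬IsExceptional a b c) (hα : 0 < α)
    (hβ : 0 < β) (hk : 0 < k)
    (hk_eq : (a : ℤ) ^ α * (a ^ i) ^ 2 + b ^ β * (b ^ j) ^ 2 = h ^ 2 * c ^ k)
    (hm_eq : (a : ℤ) ^ α * u ^ 2 + b ^ β * v ^ 2 = h ^ 2 * c ^ m) : k ≤ m := by
  by_contra! hlt
  obtain ⟨μ, n, u₁, v₁, P, Q, hr, rfl, hsum, haP, hbQ, hS, hT'⟩ :=
    (T.primeForm hα hβ).exists_prime_power (Or.inr (T.form_ne_sq hα hβ)) hk_eq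
      (not_dvd_prime_pow T.prime_c T.prime_a T.ne_ac.symm i) (Or.inr (T.form_ne_sq hα hβ)) hm_eq hlt
  obtain ⟨i', hi'⟩ := exists_sq_eq_pow_sq T.prime_a (Dvd.intro _ haP.symm)
  obtain ⟨j', hj'⟩ := exists_sq_eq_pow_sq T.prime_b (Dvd.intro _ hbQ.symm)
  rw [hi', hj', ← pow_mul, ← pow_mul, ← pow_add, ← pow_add] at hsum hS hT'
  exact hT (T.isExceptional_of_oddPow (by lia) (by lia) (Nat.pos_of_mul_pos_right hk) hr hsum
    (Dvd.intro_left _ haP.symm) (Dvd.intro_left _ hbQ.symm) hS.symm hT'.symm)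

theorem eq_of_form_eq (T : PrimeTriple a b c h) (hT : ¬IsExceptional a b c) {i' j' k' : ℕ}
    (hα : 0 < α) (hβ : 0 < β) (hk : 0 < k) (hk' : 0 < k')
    (hk_eq : (a : ℤ) ^ α * (a ^ i) ^ 2 + b ^ β * (b ^ j) ^ 2 = h ^ 2 * c ^ k)
    (hk'_eq : (a : ℤ) ^ α * (a ^ i') ^ 2 + b ^ β * (b ^ j') ^ 2 = h ^ 2 * c ^ k') :
    i = i' ∧ j = j' ∧ k = k' := by
  obtain rfl : k = k' := le_antisymm (T.le_of_form_eq hT hα hβ hk hk_eq hk'_eq)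
    (T.le_of_form_eq hT hα hβ hk' hk'_eq hk_eq)
  have hca (n : ℕ) := not_dvd_prime_pow T.prime_c T.prime_a T.ne_ac.symm n
  have F := T.primeForm hα hβ
  obtain ⟨w, y, hw, hy⟩ := F.exists_sign hk le_rfl hk_eq hk'_eq (hca i) (hca i')
  rw [← hw] at hk_eq
  obtain ⟨hi, hj⟩ := F.sq_eq_sq_of_same_exponent hk_eq hk'_eq hy
  rw [hw] at hj
  have pow_inj {p n n' : ℕ} (hp : p.Prime) (h : ((p : ℤ) ^ n') ^ 2 = (p ^ n) ^ 2) : n = n' := by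
    have hnat : (p ^ n') ^ 2 = (p ^ n) ^ 2 := by exact_mod_cast h
    exact (Nat.pow_right_injective hp.two_le (Nat.pow_left_injective two_ne_zero hnat)).symm
  exact ⟨pow_inj T.prime_a hi, pow_inj T.prime_b hj, rfl⟩

theorem eq_of_parity_eq (T : PrimeTriple a b c h) (hT : ¬IsExceptional a b c) {x' y' k' : ℕ}
    (hx : 0 < x) (hy : 0 < y) (hx' : 0 < x') (hy' : 0 < y') (hk : 0 < k) (hk' : 0 < k')
    (hxx' : Even x ↔ Even x') (hyy' : Even y ↔ Even y')
    (hk_eq : (a : ℤ) ^ x + b ^ y = h ^ 2 * c ^ k)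
    (hk'_eq : (a : ℤ) ^ x' + b ^ y' = h ^ 2 * c ^ k') : x = x' ∧ y = y' ∧ k = k' := by
  have split {n n' : ℕ} (hn : 0 < n) (hn' : 0 < n') (h : Even n ↔ Even n') :
      ∃ r s s', 0 < r ∧ n = r + s * 2 ∧ n' = r + s' * 2 :=
    ⟨2 - n % 2, (n - 1) / 2, (n' - 1) / 2, by grind⟩
  obtain ⟨α, i, i', hα, rfl, rfl⟩ := split hx hx' hxx'
  obtain ⟨β, j, j', hβ, rfl, rfl⟩ := split hy hy' hyy'
  simp only [pow_add, pow_mul] at hk_eq hk'_eq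
  obtain ⟨rfl, rfl, rfl⟩ := T.eq_of_form_eq hT hα hβ hk hk' hk_eq hk'_eq
  exact ⟨rfl, rfl, rfl⟩

end PrimeTriple

/-! ### The case `c = 2` -/

/-- A solution `(x, y, z)` in positive integers of `a ^ x + b ^ y = c ^ z`. -/
def IsSolution (a b c x y z : ℕ) : Prop :=
  0 < x ∧ 0 < y ∧ 0 < z ∧ a ^ x + b ^ y = c ^ z

theorem IsSolution.swap {a b c x y z : ℕ} (S : IsSolution a b c x y z) :
    IsSolution b a c y x z :=
  ⟨S.2.1, S.1, S.2.2.1, add_comm (a ^ x) _ ▸ S.2.2.2⟩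

section TwoAdicValuation

variable {a b : ℤ} {x y z x' y' z' : ℕ}

theorem emultiplicity_two_lt_mul {v w : ℤ} (hv : v ≠ 0) (hw : 2 ∣ w) :
    emultiplicity 2 v < emultiplicity 2 (w * v) := by
  have hfin : FiniteMultiplicity 2 v := Int.finiteMultiplicity_iff.2 ⟨by decide, hv⟩
  rw [hfin.emultiplicity_eq_multiplicity, ← ENat.add_one_le_iff (ENat.natCast_ne_top _),
    ← Nat.cast_one, ← Nat.cast_add, ← pow_dvd_iff_le_emultiplicity, pow_succ']
  exact mul_dvd_mul hw (pow_multiplicity_dvd 2 v)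

theorem emultiplicity_two_odd_pow_sub_one (ha : Odd a) (hx : Odd x) :
    emultiplicity 2 (a ^ x - 1) = emultiplicity 2 (a - 1) := by
  have h := emultiplicity_pow_sub_pow_of_prime Int.prime_two (ha.sub_odd odd_one).two_dvd
    (by rwa [← even_iff_two_dvd, Int.not_even_iff_odd]) (n := x)
    (by exact_mod_cast hx.not_two_dvd_nat)
  rwa [one_pow] at h

theorem emultiplicity_two_odd_pow_add_one (ha : Odd a) (hx : Odd x) :
    emultiplicity 2 (a ^ x + 1) = emultiplicity 2 (a + 1) := by
  have h := emultiplicity_two_odd_pow_sub_one ha.neg hx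
  rwa [hx.neg_pow, ← emultiplicity_neg, ← emultiplicity_neg 2 (-a - 1), neg_sub, neg_sub,
    sub_neg_eq_add, sub_neg_eq_add, add_comm, add_comm 1 a] at h

theorem emultiplicity_two_sq_sub_one_le (ha : Odd a) (ha1 : 1 < a) (hb1 : 1 < b) (hx : Odd x)
    (hy : Even y) (hy0 : 0 < y) (h : a ^ x + b ^ y = 2 ^ z) :
    emultiplicity 2 (b ^ 2 - 1) ≤ emultiplicity 2 (a + 1) := by
  rw [← emultiplicity_two_odd_pow_add_one ha hx]
  refine emultiplicity_le_emultiplicity_iff.2 fun n hn => ?_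
  obtain ⟨l, rfl⟩ := hy.two_dvd
  have hb2 : b ^ 2 ≤ b ^ (2 * l) := pow_le_pow_right₀ hb1.le (by lia)
  have hnz : n ≤ z := by
    refine ((pow_lt_pow_iff_right₀ (one_lt_two (α := ℤ))).1 ?_).le
    have := Int.le_of_dvd (by nlinarith) hn
    have : 0 < a ^ x := by positivity
    linarith
  rw [show a ^ x + 1 = 2 ^ z - ((b ^ 2) ^ l - 1) by rw [← pow_mul]; linarith]
  exact dvd_sub (pow_dvd_pow 2 hnz) (hn.trans (sub_one_dvd_pow_sub_one _ _))

theorem emultiplicity_two_sub_one_lt (hb : Odd b) (hb1 : 1 < b) :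
    emultiplicity 2 (b - 1) < emultiplicity 2 (b ^ 2 - 1) := by
  rw [show b ^ 2 - 1 = (b + 1) * (b - 1) by ring]
  exact emultiplicity_two_lt_mul (by lia) (hb.add_odd odd_one).two_dvd

theorem emultiplicity_two_add_one_lt (hb : Odd b) (hb1 : 1 < b) :
    emultiplicity 2 (b + 1) < emultiplicity 2 (b ^ 2 - 1) := by
  rw [show b ^ 2 - 1 = (b - 1) * (b + 1) by ring]
  exact emultiplicity_two_lt_mul (by lia) (hb.sub_odd odd_one).two_dvd

theorem false_of_odd_even_of_even_odd (ha : Odd a) (hb : Odd b) (ha1 : 1 < a) (hb1 : 1 < b)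
    (hx : Odd x) (hy : Even y) (hy0 : 0 < y) (h : a ^ x + b ^ y = 2 ^ z)
    (hx' : Even x') (hy' : Odd y') (hx0' : 0 < x') (h' : a ^ x' + b ^ y' = 2 ^ z') : False := by
  have hab := emultiplicity_two_sq_sub_one_le ha ha1 hb1 hx hy hy0 h
  have hba := emultiplicity_two_sq_sub_one_le hb hb1 ha1 hy' hx' hx0' (add_comm (a ^ x') _ ▸ h')
  have ha2 := emultiplicity_two_add_one_lt ha ha1
  have hb2 := emultiplicity_two_add_one_lt hb hb1
  exact (((hab.trans_lt ha2).trans_le hba).trans hb2).false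

theorem false_of_odd_even_of_odd_odd (ha : Odd a) (hb : Odd b) (ha1 : 1 < a) (hb1 : 1 < b)
    (hx : Odd x) (hy : Even y) (hy0 : 0 < y) (h : a ^ x + b ^ y = 2 ^ z)
    (hx' : Odd x') (hy' : Odd y') (h' : a ^ x' + b ^ y' = 2 ^ z') : False := by
  have hlt : emultiplicity 2 (b ^ y' - 1) < emultiplicity 2 (a ^ x' + 1) := by
    rw [emultiplicity_two_odd_pow_sub_one hb hy', emultiplicity_two_odd_pow_add_one ha hx']
    exact (emultiplicity_two_sub_one_lt hb hb1).trans_le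
      (emultiplicity_two_sq_sub_one_le ha ha1 hb1 hx hy hy0 h)
  have hz' : emultiplicity 2 ((2 : ℤ) ^ z') = emultiplicity 2 (b ^ y' - 1) := by
    rw [← h', ← emultiplicity_add_of_gt hlt, add_comm (a ^ x' + 1), sub_add_add_cancel, add_comm]
  have hdvd : (2 : ℤ) ^ z' ∣ b ^ y' - 1 :=
    pow_dvd_iff_le_emultiplicity.2 (hz' ▸ le_emultiplicity_of_pow_dvd dvd_rfl)
  have := Int.le_of_dvd (sub_pos.2 (one_lt_pow₀ hb1 hy'.pos.ne')) hdvd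
  have : 0 < a ^ x' := by positivity
  linarith

end TwoAdicValuation

section SquareResidues

variable {w n m : ℕ}

theorem pow_mod_of_even (h : w ^ 2 % m = 1 % m) (hn : Even n) : w ^ n % m = 1 % m := by
  rw [pow_mod_eq_pow_mod_period h, Nat.even_iff.1 hn, pow_zero]

theorem pow_mod_of_odd (h : w ^ 2 % m = 1 % m) (hn : Odd n) : w ^ n % m = w % m := by
  rw [pow_mod_eq_pow_mod_period h, Nat.odd_iff.1 hn, pow_one]

theorem sq_mod_eight_of_odd (hw : Odd w) : w ^ 2 % 8 = 1 := by
  have := Nat.eight_dvd_sq_sub_one_of_odd hw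
  have := Nat.one_le_pow 2 w hw.pos
  lia

theorem sq_mod_three_of_ne_zero (hw : w % 3 ≠ 0) : w ^ 2 % 3 = 1 := by
  rcases (by lia : w % 3 = 1 ∨ w % 3 = 2) with h | h <;> simp [Nat.pow_mod, h]

end SquareResidues

namespace IsSolution

variable {a b x y z x' y' z' : ℕ}

theorem two_lt_exponent (ha : 2 < a) (hb : 2 < b) (S : IsSolution a b 2 x y z) : 2 < z := by
  obtain ⟨hx, hy, -, h⟩ := S
  have := Nat.le_self_pow hx.ne' a
  have := Nat.le_self_pow hy.ne' b
  exact (Nat.pow_lt_pow_iff_right one_lt_two).1 (by lia)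

theorem not_even_and_even (ha : 2 < a) (hb : 2 < b) (ha' : Odd a) (hb' : Odd b)
    (S : IsSolution a b 2 x y z) : ¬(Even x ∧ Even y) := by
  rintro ⟨hx, hy⟩
  obtain ⟨s, rfl⟩ := Nat.exists_eq_add_of_lt (S.two_lt_exponent ha hb)
  have := pow_mod_of_even (sq_mod_eight_of_odd ha') hx
  have := pow_mod_of_even (sq_mod_eight_of_odd hb') hy
  have := S.2.2.2
  lia

theorem odd_and_even (ha : 2 < a) (hb : 2 < b) (ha' : Odd a) (hb' : Odd b)
    (S : IsSolution a b 2 x y z) (S' : IsSolution a b 2 x' y' z') (hx : Odd x) (hy : Even y) :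
    Odd x' ∧ Even y' := by
  have haZ : Odd (a : ℤ) := by exact_mod_cast ha'
  have hbZ : Odd (b : ℤ) := by exact_mod_cast hb'
  have h : (a : ℤ) ^ x + b ^ y = 2 ^ z := by exact_mod_cast S.2.2.2
  have h' : (a : ℤ) ^ x' + b ^ y' = 2 ^ z' := by exact_mod_cast S'.2.2.2
  by_contra hne
  have hy' : Odd y' := by
    have := S'.not_even_and_even ha hb ha' hb'
    grind
  rcases Nat.even_or_odd x' with hx' | hx'
  · exact false_of_odd_even_of_even_odd haZ hbZ (by lia) (by lia) hx hy S.2.1 h hx' hy' S'.1 h'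
  · exact false_of_odd_even_of_odd_odd haZ hbZ (by lia) (by lia) hx hy S.2.1 h hx' hy' h'

theorem eq_of_base_two (ha : a.Prime) (hb : b.Prime) (hab : a ≠ b) (ha2 : a ≠ 2) (hb2 : b ≠ 2)
    (hex : ¬IsExceptional a b 2) (S : IsSolution a b 2 x y z) (S' : IsSolution a b 2 x' y' z') :
    x = x' ∧ y = y' ∧ z = z' := by
  have ha3 : 2 < a := ha.two_le.lt_of_ne' ha2
  have hb3 : 2 < b := hb.two_le.lt_of_ne' hb2
  have ha' := ha.odd_of_ne_two ha2
  have hb' := hb.odd_of_ne_two hb2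
  have hparity : (Even x ↔ Even x') ∧ (Even y ↔ Even y') := by
    have := S.odd_and_even ha3 hb3 ha' hb' S'
    have := S'.odd_and_even ha3 hb3 ha' hb' S
    have := S.swap.odd_and_even hb3 ha3 hb' ha' S'.swap
    have := S'.swap.odd_and_even hb3 ha3 hb' ha' S.swap
    have := S.not_even_and_even ha3 hb3 ha' hb'
    have := S'.not_even_and_even ha3 hb3 ha' hb'
    grind
  have T : PrimeTriple a b 2 2 := ⟨ha, hb, Nat.prime_two, hab, ha2, hb2, Or.inr ⟨rfl, rfl⟩⟩
  obtain ⟨s, rfl⟩ := Nat.exists_eq_add_of_lt (S.two_lt_exponent ha3 hb3)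
  obtain ⟨s', rfl⟩ := Nat.exists_eq_add_of_lt (S'.two_lt_exponent ha3 hb3)
  have h : (a : ℤ) ^ x + b ^ y = 2 ^ 2 * (2 : ℕ) ^ (s + 1) := by
    rw [Nat.cast_ofNat, ← pow_add]
    exact_mod_cast S.2.2.2
  have h' : (a : ℤ) ^ x' + b ^ y' = 2 ^ 2 * (2 : ℕ) ^ (s' + 1) := by
    rw [Nat.cast_ofNat, ← pow_add]
    exact_mod_cast S'.2.2.2
  obtain ⟨rfl, rfl, hs⟩ := T.eq_of_parity_eq hex S.1 S.2.1 S'.1 S'.2.1 s.succ_pos s'.succ_pos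
    hparity.1 hparity.2 h h'
  exact ⟨rfl, rfl, by lia⟩

end IsSolution

/-! ### Differences of squares and a Pell equation -/

section DifferenceOfSquares

variable {u v x n : ℕ}

theorem exists_two_pow_of_two_pow_add_sq_eq_sq (hu : Odd u) (hv : Odd v)
    (h : 2 ^ x + u ^ 2 = v ^ 2) : ∃ n, u + 1 = 2 ^ n ∧ v = 2 ^ n + 1 := by
  have huv : u < v := lt_of_pow_lt_pow_left₀ 2 v.zero_le (by have := Nat.two_pow_pos x; lia)
  obtain ⟨d, rfl⟩ := Nat.exists_eq_add_of_le huv.le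
  have hprod : 2 ^ x = d * (2 * u + d) := by nlinarith
  obtain ⟨i, -, rfl⟩ := (Nat.dvd_prime_pow Nat.prime_two).1 (Dvd.intro _ hprod.symm)
  obtain ⟨j, -, hj⟩ := (Nat.dvd_prime_pow Nat.prime_two).1 (Dvd.intro_left _ hprod.symm)
  have hij : i < j := (Nat.pow_lt_pow_iff_right one_lt_two).1 (by have := hu.pos; lia)
  obtain ⟨j, rfl⟩ := Nat.exists_eq_add_of_le' (Nat.one_le_of_lt hij)
  have hi : i = 1 := by
    by_contra hi1
    rcases (by lia : i = 0 ∨ 2 ≤ i) with rfl | hi2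
    · exact Nat.not_even_iff_odd.2 hv (hu.add_one)
    · obtain ⟨i, rfl⟩ := Nat.exists_eq_add_of_le' hi2
      obtain ⟨j, rfl⟩ := Nat.exists_eq_add_of_le' (show 1 ≤ j by lia)
      grind
  subst hi
  exact ⟨j, by lia, by lia⟩

theorem eq_add_one_of_sq_add_prime_pow_eq_sq {p : ℕ} (hp : p.Prime) (hpu : ¬p ∣ 2 * u)
    (h : u ^ 2 + p ^ n = v ^ 2) : v = u + 1 := by
  have huv : u < v :=
    lt_of_pow_lt_pow_left₀ 2 v.zero_le (by have := Nat.pow_pos hp.pos (n := n); lia)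
  obtain ⟨d, rfl⟩ := Nat.exists_eq_add_of_le huv.le
  have hprod : p ^ n = d * (2 * u + d) := by nlinarith
  obtain ⟨i, -, rfl⟩ := (Nat.dvd_prime_pow hp).1 (Dvd.intro _ hprod.symm)
  obtain ⟨j, -, hj⟩ := (Nat.dvd_prime_pow hp).1 (Dvd.intro_left _ hprod.symm)
  obtain rfl : i = 0 := by
    by_contra hi
    have hij : i ≤ j := (Nat.pow_le_pow_iff_right hp.one_lt).1 (by lia)
    exact hpu ((Nat.dvd_add_left (dvd_pow_self p hi)).1 (hj ▸ dvd_pow_self p (by lia)))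
  rfl

end DifferenceOfSquares

section Pell

/-- The positive solutions `(X, Y)` of `X ^ 2 + 2 = 3 * Y ^ 2`, in increasing order. -/
def pell : ℕ → ℕ × ℕ
  | 0 => (1, 1)
  | n + 1 => (2 * (pell n).1 + 3 * (pell n).2, (pell n).1 + 2 * (pell n).2)

theorem pell_succ (n : ℕ) :
    pell (n + 1) = (2 * (pell n).1 + 3 * (pell n).2, (pell n).1 + 2 * (pell n).2) := rfl

theorem exists_pell_eq (Y : ℕ) : ∀ X, 0 < Y → X ^ 2 + 2 = 3 * Y ^ 2 → ∃ n, pell n = (X, Y) := by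
  induction Y using Nat.strong_induction_on with
  | _ Y ih =>
  intro X hY h
  rcases eq_or_ne Y 1 with rfl | hY1
  · obtain rfl : X = 1 := by nlinarith
    exact ⟨0, rfl⟩
  have hY2 : 2 ≤ Y := by lia
  have hYX : Y < X := by nlinarith
  obtain ⟨Y', hY'⟩ := Nat.exists_eq_add_of_lt (show X < 2 * Y by nlinarith)
  obtain ⟨X', hX'⟩ := Nat.exists_eq_add_of_le (show 3 * Y ≤ 2 * X by nlinarith)
  obtain rfl : X = 2 * X' + 3 * (Y' + 1) := by lia
  obtain rfl : Y = X' + 2 * (Y' + 1) := by lia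
  obtain ⟨n, hn⟩ := ih (Y' + 1) (by lia) X' (by lia) (by nlinarith)
  exact ⟨n + 1, by rw [pell_succ, hn]⟩

theorem pell_add_eighteen_mod (n : ℕ) :
    (pell (n + 18)).1 % 153 = (pell n).1 % 153 ∧ (pell (n + 18)).2 % 153 = (pell n).2 % 153 := by
  induction n with
  | zero => decide
  | succ n ih =>
    rw [add_right_comm, pell_succ, pell_succ n]
    lia

theorem pell_mod (n : ℕ) : (pell (n % 18)).2 % 153 = (pell n).2 % 153 :=
  (show Function.Periodic (fun n => (pell n).2 % 153) 18 from
    fun n => (pell_add_eighteen_mod n).2).map_mod_nat n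

theorem seventeen_dvd_pell_of_nine_dvd {n : ℕ} (h : 9 ∣ (pell n).2) : 17 ∣ (pell n).2 := by
  have hperiod : ∀ r < 18, 9 ∣ (pell r).2 % 153 → 17 ∣ (pell r).2 % 153 := by decide
  have := hperiod (n % 18) (Nat.mod_lt _ (by norm_num))
  rw [pell_mod] at this
  lia

-- If `9` divides `3 ^ ((n - 1) / 2)`, so does `17`.
theorem eq_one_or_three_of_sq_add_two_eq_three_pow {u n : ℕ} (hn : Odd n)
    (h : u ^ 2 + 2 = 3 ^ n) : n = 1 ∨ n = 3 := by
  by_contra! hne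
  obtain ⟨k, rfl⟩ := hn
  obtain ⟨m, hm⟩ := exists_pell_eq (3 ^ k) u (by positivity) (by rw [h]; ring)
  have h9 : 9 ∣ 3 ^ k := pow_dvd_pow 3 (show 2 ≤ k by lia)
  have h17 : 17 ∣ 3 ^ k := by
    have := seventeen_dvd_pell_of_nine_dvd (n := m)
    rw [hm] at this
    exact this h9
  have := (show Nat.Prime 17 by norm_num).dvd_of_dvd_pow h17
  lia

end Pell

section PowerResidues

theorem two_pow_mod_three (n : ℕ) : Even n ∧ 2 ^ n % 3 = 1 ∨ Odd n ∧ 2 ^ n % 3 = 2 := by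
  rcases Nat.even_or_odd n with h | h
  · exact Or.inl ⟨h, pow_mod_of_even (by norm_num) h⟩
  · exact Or.inr ⟨h, pow_mod_of_odd (by norm_num) h⟩

theorem eq_three_of_pow_mod_three {p n : ℕ} (hp : p.Prime) (h : p ^ n % 3 = 0) : p = 3 :=
  (Nat.prime_eq_prime_of_dvd_pow Nat.prime_three hp (Nat.dvd_of_mod_eq_zero h)).symm

theorem eq_one_of_odd_of_two_pow_mod_eight {x : ℕ} (hx : Odd x) (h : 2 ^ x % 8 ≠ 0) : x = 1 := by
  by_contra hx1
  obtain ⟨x, rfl⟩ := Nat.exists_eq_add_of_le' (show 3 ≤ x by grind)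
  lia

end PowerResidues

namespace IsSolution

variable {p q x y z : ℕ}

theorem bases_of_even_even (hp : p.Prime) (hq : q.Prime) (hp2 : p ≠ 2) (hq2 : q ≠ 2)
    (hy : Even y) (hz : Even z) (S : IsSolution 2 p q x y z) :
    p = 3 ∧ q = 5 ∨ p = 7 ∧ q = 3 := by
  obtain ⟨l, rfl⟩ := hy.two_dvd
  obtain ⟨w, rfl⟩ := hz.two_dvd
  obtain ⟨-, hl, -, h⟩ := S
  obtain ⟨n, hpn, hqn⟩ := exists_two_pow_of_two_pow_add_sq_eq_sq
    (u := p ^ l) (v := q ^ w) (hp.odd_of_ne_two hp2).pow (hq.odd_of_ne_two hq2).pow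
    (by rw [← pow_mul', ← pow_mul', h])
  have hpl := Nat.le_self_pow (show l ≠ 0 by lia) p
  have hp3 := hp.two_le
  rcases two_pow_mod_three n with ⟨-, hn⟩ | ⟨-, hn⟩
  · obtain rfl := eq_three_of_pow_mod_three hp (n := l) (by lia)
    have hn2 := le_two_of_three_pow_add_one_eq hpn
    interval_cases n
    · lia
    · lia
    · exact Or.inl ⟨rfl, ((Nat.Prime.pow_eq_iff Nat.prime_five).1 hqn).1⟩
  · obtain rfl := eq_three_of_pow_mod_three hq (n := w) (by lia)
    rcases eq_one_or_three_of_three_pow_eq hqn with rfl | rfl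
    · lia
    · have h7 : p ^ l = 7 := by lia
      exact Or.inr ⟨((Nat.Prime.pow_eq_iff (by norm_num)).1 h7).1, rfl⟩

theorem bases_of_even_odd_even (hp : p.Prime) (hq : q.Prime) (hp2 : p ≠ 2) (hx : Even x)
    (hy : Odd y) (hz : Even z) (S : IsSolution 2 p q x y z) :
    p = 5 ∧ q = 3 ∨ p = 17 ∧ q = 3 := by
  obtain ⟨m, rfl⟩ := hx.two_dvd
  obtain ⟨w, rfl⟩ := hz.two_dvd
  obtain ⟨hm, -, -, h⟩ := S
  have hpm : ¬p ∣ 2 * 2 ^ m := fun hd =>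
    hp2 (Nat.prime_eq_prime_of_dvd_pow hp Nat.prime_two (m := m + 1) (by rwa [pow_succ']))
  have hqm : q ^ w = 2 ^ m + 1 := eq_add_one_of_sq_add_prime_pow_eq_sq hp hpm
    (by rw [← pow_mul', ← pow_mul', h])
  have hpy : p ^ y = 2 ^ (m + 1) + 1 := by
    rw [pow_mul', pow_mul', hqm] at h
    lia
  rcases two_pow_mod_three m with ⟨-, hm3⟩ | ⟨-, hm3⟩
  · obtain rfl := eq_three_of_pow_mod_three hp (n := y) (by lia)
    rcases eq_one_or_three_of_three_pow_eq hpy with hm1 | hm1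
    · lia
    · rw [hm1] at hpy
      obtain rfl : y = 2 := Nat.pow_right_injective (show 2 ≤ 3 by norm_num) (by simpa using hpy)
      exact absurd hy (by decide)
  · obtain rfl := eq_three_of_pow_mod_three hq (n := w) (by lia)
    rcases eq_one_or_three_of_three_pow_eq hqm with rfl | rfl
    · exact Or.inl ⟨((Nat.Prime.pow_eq_iff Nat.prime_five).1 hpy).1, rfl⟩
    · exact Or.inr ⟨((Nat.Prime.pow_eq_iff (by norm_num)).1 hpy).1, rfl⟩

theorem bases_of_odd_even (hp : p.Prime) (hq : q.Prime) (hp2 : p ≠ 2) (hp3 : p ≠ 3)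
    (hx : Odd x) (hy : Even y) (S : IsSolution 2 p q x y z) : p = 5 ∧ q = 3 ∨ p = 7 ∧ q = 3 := by
  have h := S.2.2.2
  have hp3' : p % 3 ≠ 0 := fun h0 => hp3 (eq_three_of_pow_mod_three hp (n := 1) (by rwa [pow_one]))
  have hy3 := pow_mod_of_even (sq_mod_three_of_ne_zero hp3') hy
  have hx3 : 2 ^ x % 3 = 2 % 3 := pow_mod_of_odd (by norm_num) hx
  obtain rfl := eq_three_of_pow_mod_three hq (n := z) (by lia)
  rcases Nat.even_or_odd z with hz | hz
  · have := S.bases_of_even_even hp hq hp2 (by norm_num) hy hz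
    lia
  · have hy8 := pow_mod_of_even (sq_mod_eight_of_odd (hp.odd_of_ne_two hp2)) hy
    have hz8 : 3 ^ z % 8 = 3 % 8 := pow_mod_of_odd (by norm_num) hz
    obtain rfl := eq_one_of_odd_of_two_pow_mod_eight hx (by lia)
    obtain ⟨l, rfl⟩ := hy.two_dvd
    have hl : l ≠ 0 := by have := S.2.1; lia
    rw [pow_mul', add_comm] at h
    have hpl := Nat.le_self_pow hl p
    have hp2' := hp.two_le
    rcases eq_one_or_three_of_sq_add_two_eq_three_pow hz h with rfl | rfl
    · nlinarith
    · have h5 : p ^ l = 5 := by nlinarith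
      exact Or.inl ⟨((Nat.Prime.pow_eq_iff Nat.prime_five).1 h5).1, rfl⟩

end IsSolution

/-! ### Prime values of binary quadratic forms -/

section Thue

theorem exists_sq_lt_and_dvd_mul_sub_mul {n : ℕ} (hn : ¬IsSquare n) (s t : ℤ) :
    ∃ X Y : ℤ, (X ≠ 0 ∨ Y ≠ 0) ∧ X ^ 2 < n ∧ Y ^ 2 < n ∧ (n : ℤ) ∣ t * X - s * Y := by
  have : NeZero n := ⟨by rintro rfl; exact hn (IsSquare.zero)⟩
  set k := Nat.sqrt n
  let box := Finset.range (k + 1) ×ˢ Finset.range (k + 1)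
  have hbox : (Finset.univ : Finset (ZMod n)).card < box.card := by
    rw [Finset.card_univ, ZMod.card, Finset.card_product, Finset.card_range]
    exact Nat.lt_succ_sqrt n
  obtain ⟨⟨x, y⟩, hxy, ⟨x', y'⟩, hxy', hne, heq⟩ :=
    Finset.exists_ne_map_eq_of_card_lt_of_maps_to hbox
      (f := fun w => ((t * w.1 - s * w.2 : ℤ) : ZMod n)) (fun _ _ => Finset.mem_univ _)
  simp only [box, Finset.mem_product, Finset.mem_range, Order.lt_add_one_iff] at hxy hxy'
  have hk : (k : ℤ) ^ 2 < n := by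
    rw [sq]
    exact_mod_cast (Nat.sqrt_le n).lt_of_ne fun h => hn ⟨k, h.symm⟩
  have hdiff : ∀ u ≤ k, ∀ v ≤ k, ((u : ℤ) - v) ^ 2 < n := fun u hu v hv =>
    (sq_le_sq' (by lia) (by lia)).trans_lt hk
  refine ⟨x - x', y - y', ?_, hdiff x hxy.1 x' hxy'.1, hdiff y hxy.2 y' hxy'.2, ?_⟩
  · contrapose! hne
    rw [Prod.mk.injEq]
    lia
  · convert (ZMod.intCast_eq_intCast_iff_dvd_sub _ _ n).1 heq.symm using 1
    ring

theorem exists_form_eq_mul {q : ℕ} {α β s t : ℤ} (hq : q.Prime) (hα : 0 < α) (hβ : 0 < β)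
    (ht : ¬(q : ℤ) ∣ t) (h : (q : ℤ) ∣ α * s ^ 2 + β * t ^ 2) :
    ∃ X Y k : ℤ, 0 < k ∧ k < α + β ∧ α * X ^ 2 + β * Y ^ 2 = k * q := by
  obtain ⟨X, Y, hne, hX, hY, hXY⟩ := exists_sq_lt_and_dvd_mul_sub_mul
    (Nat.prime_iff.1 hq).not_isSquare s t
  have hqZ := Nat.prime_iff_prime_int.1 hq
  have hdvd : (q : ℤ) ∣ t ^ 2 * (α * X ^ 2 + β * Y ^ 2) := by
    have heq : t ^ 2 * (α * X ^ 2 + β * Y ^ 2) =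
        (t * X - s * Y) * (α * (t * X + s * Y)) + Y ^ 2 * (α * s ^ 2 + β * t ^ 2) := by ring
    exact heq ▸ dvd_add (hXY.mul_right _) (h.mul_left _)
  obtain ⟨k, hk⟩ := (hqZ.dvd_or_dvd hdvd).resolve_left fun h => ht (hqZ.dvd_of_dvd_pow h)
  have hq0 : (0 : ℤ) < q := by exact_mod_cast hq.pos
  have hpos : 0 < α * X ^ 2 + β * Y ^ 2 := by rcases hne with h | h <;> positivity
  refine ⟨X, Y, k, pos_of_mul_pos_right (hk ▸ hpos) hq0.le, ?_, by rw [hk, mul_comm]⟩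
  refine lt_of_mul_lt_mul_left ?_ hq0.le
  rw [← hk]
  nlinarith

theorem sq_emod_three (X : ℤ) : 3 ∣ X ∧ X ^ 2 % 3 = 0 ∨ X ^ 2 % 3 = 1 := by
  rcases (by lia : X % 3 = 0 ∨ X % 3 = 1 ∨ X % 3 = 2) with h | h | h <;>
    simp [sq, Int.mul_emod, Int.dvd_iff_emod_eq_zero, h]

theorem sq_emod_two (X : ℤ) : 2 ∣ X ∧ X ^ 2 % 2 = 0 ∨ X ^ 2 % 2 = 1 := by
  rcases Int.emod_two_eq_zero_or_one X with h | h <;>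
    simp [sq, Int.mul_emod, Int.dvd_iff_emod_eq_zero, h]

variable {q : ℕ} {s t : ℤ}

theorem exists_two_mul_sq_add_nine_mul_sq_eq (hq : q.Prime) (hq3 : q % 3 = 2)
    (ht : ¬(q : ℤ) ∣ t) (h : (q : ℤ) ∣ 2 * s ^ 2 + t ^ 2) :
    ∃ X Y : ℤ, 2 * X ^ 2 + 9 * Y ^ 2 = q := by
  obtain ⟨X, Y, hXY⟩ : ∃ X Y : ℤ, 2 * X ^ 2 + Y ^ 2 = q := by
    obtain ⟨X, Y, k, hk0, hk3, hXY⟩ :=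
      exists_form_eq_mul hq two_pos one_pos ht (by rwa [one_mul])
    rcases (by lia : k = 1 ∨ k = 2) with rfl | rfl
    · exact ⟨X, Y, by linarith⟩
    · rcases sq_emod_two Y with ⟨⟨Y, rfl⟩, -⟩ | hY
      · exact ⟨Y, X, by linarith⟩
      · lia
  rcases sq_emod_three Y with ⟨⟨Y, rfl⟩, -⟩ | hY
  · exact ⟨X, Y, by linarith⟩
  · have := sq_emod_three X
    lia

theorem exists_two_mul_sq_add_three_mul_sq_eq (hq : q.Prime) (hq3 : q % 3 = 2)
    (ht : ¬(q : ℤ) ∣ t) (h : (q : ℤ) ∣ 2 * s ^ 2 + 3 * t ^ 2) :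
    ∃ X Y : ℤ, 2 * X ^ 2 + 3 * Y ^ 2 = q := by
  obtain ⟨X, Y, k, hk0, hk5, hXY⟩ := exists_form_eq_mul hq two_pos three_pos ht h
  have hX := sq_emod_three X
  have hY := sq_emod_three Y
  have hY2 := sq_emod_two Y
  rcases (by lia : k = 1 ∨ k = 2 ∨ k = 3 ∨ k = 4) with rfl | rfl | rfl | rfl
  · exact ⟨X, Y, by rw [hXY, one_mul]⟩
  · obtain ⟨Y, rfl⟩ : 2 ∣ Y := by lia
    lia
  · obtain ⟨X, rfl⟩ : 3 ∣ X := by lia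
    lia
  · obtain ⟨Y, rfl⟩ : 2 ∣ Y := by lia
    obtain ⟨X, rfl⟩ : 2 ∣ X := by
      have := sq_emod_two X
      lia
    exact ⟨X, Y, by linarith⟩

end Thue

section TwoThree

theorem two_add_three_pow_ne {x y y' : ℕ} (hy : Even y) (hy0 : 0 < y) (hy' : Odd y')
    (hy1' : y' ≠ 1) : 2 + 3 ^ y ≠ 2 ^ x + 3 ^ y' := by
  intro h
  obtain ⟨l, rfl⟩ := Nat.exists_eq_add_of_le' (show 2 ≤ y by grind)
  obtain ⟨l', rfl⟩ := Nat.exists_eq_add_of_le' (show 2 ≤ y' by grind)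
  have hx63 : 2 ^ x % 63 = 2 ^ (x % 6) % 63 := pow_mod_eq_pow_mod_period (by norm_num) x
  have hl7 : 3 ^ l % 7 = 3 ^ (l % 6) % 7 := pow_mod_eq_pow_mod_period (by norm_num) l
  have hl7' : 3 ^ l' % 7 = 3 ^ (l' % 6) % 7 := pow_mod_eq_pow_mod_period (by norm_num) l'
  have hx7 : 2 ^ x % 7 = 2 := by
    have hx6 : x % 6 < 6 := Nat.mod_lt _ (by norm_num)
    interval_cases x % 6 <;> lia
  have hl : l % 6 = 0 ∨ l % 6 = 2 ∨ l % 6 = 4 := by grind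
  have hl' : l' % 6 = 1 ∨ l' % 6 = 3 ∨ l' % 6 = 5 := by grind
  rcases hl with hl | hl | hl <;> rcases hl' with hl' | hl' | hl' <;> rw [hl] at hl7 <;>
    rw [hl'] at hl7' <;> lia

variable {q x y z x' y' z' : ℕ}

theorem primeTriple_two_three (hq : q.Prime) (hq2 : q ≠ 2) (hq3 : q ≠ 3) :
    PrimeTriple 2 3 q 1 :=
  ⟨Nat.prime_two, Nat.prime_three, hq, by norm_num, hq2.symm, hq3.symm, Or.inl ⟨rfl, Or.inl rfl⟩⟩

theorem not_isExceptional_two_three (hq11 : q ≠ 11) : ¬IsExceptional 2 3 q := by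
  simp [IsExceptional, hq11]

namespace IsSolution

theorem exponent_eq_one_of_two_three_even (hq : q.Prime) (hq11 : q ≠ 11) (hq3 : q % 3 = 2)
    (hq2 : q ≠ 2) (hy : Even y) (S : IsSolution 2 3 q 1 y z) : z = 1 := by
  obtain ⟨-, hy0, hz, h⟩ := S
  obtain ⟨l, rfl⟩ : ∃ l, y = 2 + 2 * l := ⟨(y - 2) / 2, by grind⟩
  have h' : (2 : ℤ) ^ 1 + 3 ^ (2 + 2 * l) = q ^ z := by exact_mod_cast h
  have hq3' : q ≠ 3 := by lia
  obtain ⟨X, Y, hXY⟩ := exists_two_mul_sq_add_nine_mul_sq_eq hq hq3 (s := 1) (t := 3 ^ (1 + l))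
    (not_dvd_prime_pow hq Nat.prime_three hq3' _) (by
      rw [show (2 : ℤ) * 1 ^ 2 + (3 ^ (1 + l)) ^ 2 = q ^ z by rw [← h']; ring]
      exact dvd_pow_self _ hz.ne')
  refine le_antisymm ?_ hz
  exact (primeTriple_two_three hq hq2 hq3').le_of_form_eq (not_isExceptional_two_three hq11)
    (α := 1) (β := 2) (i := 0) (j := l) (u := X) (v := Y) one_pos two_pos hz
    (by push_cast; linear_combination h') (by push_cast; linear_combination hXY)

theorem exponent_eq_one_of_two_three_odd (hq : q.Prime) (hq11 : q ≠ 11) (hq3 : q % 3 = 2)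
    (hq2 : q ≠ 2) (hx : Odd x) (hy : Odd y) (S : IsSolution 2 3 q x y z) : z = 1 := by
  obtain ⟨-, -, hz, h⟩ := S
  obtain ⟨i, rfl⟩ := hx
  obtain ⟨j, rfl⟩ := hy
  have h' : (2 : ℤ) ^ (2 * i + 1) + 3 ^ (2 * j + 1) = q ^ z := by exact_mod_cast h
  have hq3' : q ≠ 3 := by lia
  obtain ⟨X, Y, hXY⟩ := exists_two_mul_sq_add_three_mul_sq_eq hq hq3 (s := 2 ^ i) (t := 3 ^ j)
    (not_dvd_prime_pow hq Nat.prime_three hq3' _) (by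
      rw [show (2 : ℤ) * (2 ^ i) ^ 2 + 3 * (3 ^ j) ^ 2 = q ^ z by rw [← h']; ring]
      exact dvd_pow_self _ hz.ne')
  refine le_antisymm ?_ hz
  exact (primeTriple_two_three hq hq2 hq3').le_of_form_eq (not_isExceptional_two_three hq11)
    (α := 1) (β := 1) (i := i) (j := j) (u := X) (v := Y) one_pos one_pos hz
    (by push_cast; linear_combination h') (by push_cast; linear_combination hXY)

theorem false_of_two_three (hq : q.Prime) (hq2 : q ≠ 2) (hq3 : q ≠ 3) (hq11 : q ≠ 11)
    (hx : Odd x) (hy : Even y) (hz : Odd z) (S : IsSolution 2 3 q x y z)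
    (hx' : Odd x') (hy' : Odd y') (hz' : Odd z') (S' : IsSolution 2 3 q x' y' z') : False := by
  have h := S.2.2.2
  have h' := S'.2.2.2
  have hqsq := sq_mod_eight_of_odd (hq.odd_of_ne_two hq2)
  have hqz : q ^ z % 8 = q % 8 := pow_mod_of_odd hqsq hz
  have hqz' : q ^ z' % 8 = q % 8 := pow_mod_of_odd hqsq hz'
  have h3y : 3 ^ y % 8 = 1 % 8 := pow_mod_of_even (by norm_num) hy
  have h3y' : 3 ^ y' % 8 = 3 % 8 := pow_mod_of_odd (by norm_num) hy'
  have hx8 := eq_one_of_odd_of_two_pow_mod_eight hx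
  have hx8' := eq_one_of_odd_of_two_pow_mod_eight hx'
  obtain ⟨rfl, hx1'⟩ : x = 1 ∧ x' ≠ 1 := by
    rcases eq_or_ne x 1 with rfl | hx1 <;> rcases eq_or_ne x' 1 with rfl | hx1' <;> lia
  have hq3' : q % 3 = 2 := by
    have hq0 : q % 3 ≠ 0 := fun h0 =>
      hq3 (eq_three_of_pow_mod_three hq (n := 1) (by rwa [pow_one]))
    have hqz3 : q ^ z % 3 = q % 3 := pow_mod_of_odd (sq_mod_three_of_ne_zero hq0) hz
    obtain ⟨l, rfl⟩ := Nat.exists_eq_add_of_le' S.2.1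
    lia
  obtain rfl := S.exponent_eq_one_of_two_three_even hq hq11 hq3' hq2 hy
  obtain rfl := S'.exponent_eq_one_of_two_three_odd hq hq11 hq3' hq2 hx' hy'
  rcases eq_or_ne y' 1 with rfl | hy1'
  · have hx3' := eq_one_or_three_of_three_pow_eq (w := y) (t := x') (by lia)
    obtain rfl := hx3'.resolve_left hx1'
    lia
  · exact two_add_three_pow_ne hy S.2.1 hy' hy1' (h.trans h'.symm)

end IsSolution

end TwoThree

/-! ### Even powers of `s + t` and the case of even exponents -/

/-- The coefficients `(X, Y)` in `(s + t) ^ (2 * m) = X + 2 * Y * s * t`, where `s ^ 2 = A` and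
`t ^ 2 = -1`. -/
def evenPow (A : ℤ) : ℕ → ℤ × ℤ
  | 0 => (1, 0)
  | m + 1 => ((A - 1) * (evenPow A m).1 - 4 * A * (evenPow A m).2,
      (A - 1) * (evenPow A m).2 + (evenPow A m).1)

section EvenPow

variable (A D : ℤ)

theorem oddPow_eq_evenPow (m : ℕ) :
    (oddPow A 1 m).1 = (evenPow A m).1 - 2 * (evenPow A m).2 ∧
      (oddPow A 1 m).2 = (evenPow A m).1 + 2 * A * (evenPow A m).2 := by
  induction m with
  | zero => simp [oddPow, evenPow]
  | succ m ih =>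
    simp only [oddPow, evenPow, ih.1, ih.2]
    constructor <;> ring

theorem evenPow_add (m n : ℕ) :
    (evenPow A (m + n)).1 =
        (evenPow A m).1 * (evenPow A n).1 - 4 * A * ((evenPow A m).2 * (evenPow A n).2) ∧
      (evenPow A (m + n)).2 =
        (evenPow A m).1 * (evenPow A n).2 + (evenPow A m).2 * (evenPow A n).1 := by
  induction n with
  | zero => simp [evenPow]
  | succ n ih =>
    rw [← add_assoc]
    simp only [evenPow, ih.1, ih.2]
    constructor <;> ring

theorem evenPow_norm (m : ℕ) :
    (evenPow A m).1 ^ 2 + 4 * A * (evenPow A m).2 ^ 2 = (A + 1) ^ (2 * m) := by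
  induction m with
  | zero => simp [evenPow]
  | succ m ih =>
    rw [show 2 * (m + 1) = 2 * m + 2 by ring, pow_add, ← ih]
    simp only [evenPow]
    ring

theorem evenPow_parity (m : ℕ) :
    Odd (evenPow (4 * D) m).1 ∧ (Odd (evenPow (4 * D) m).2 ↔ Odd m) := by
  induction m with
  | zero => simp [evenPow]
  | succ m ih =>
    simp only [evenPow]
    grind

theorem exists_odd_evenPow_two_pow_mul {n : ℕ} (hn : Odd n) (k : ℕ) :
    ∃ w, Odd w ∧ (evenPow (4 * D) (2 ^ k * n)).2 = 2 ^ k * w := by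
  induction k with
  | zero => exact ⟨(evenPow (4 * D) n).2, (evenPow_parity D n).2.2 hn, by simp⟩
  | succ k ih =>
    obtain ⟨w, hw, hY⟩ := ih
    refine ⟨(evenPow (4 * D) (2 ^ k * n)).1 * w, (evenPow_parity D _).1.mul hw, ?_⟩
    rw [show 2 ^ (k + 1) * n = 2 ^ k * n + 2 ^ k * n by ring, (evenPow_add _ _ _).2, hY]
    ring

theorem two_pow_dvd_pow_sub_one (n k : ℕ) :
    (2 : ℤ) ^ (k + 3) ∣ (4 * D + 1) ^ (2 * (2 ^ k * n)) - 1 := by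
  have h : (2 : ℤ) ^ (k + 3) ∣ (4 * D + 1) ^ (2 * 2 ^ k) - 1 := by
    induction k with
    | zero => exact ⟨D * (2 * D + 1), by ring⟩
    | succ k ih =>
      obtain ⟨g, hg⟩ := ih
      refine ⟨g * (1 + 2 ^ (k + 2) * g), ?_⟩
      rw [show 2 * 2 ^ (k + 1) = (2 * 2 ^ k) * 2 by ring, pow_mul, sub_eq_iff_eq_add.1 hg]
      ring
  rw [← mul_assoc, pow_mul]
  exact h.trans (sub_one_dvd_pow_sub_one _ _)

/-- With `S = (oddPow (4 * D) 1 μ).1` and `Y = (evenPow (4 * D) μ).2`, `S ^ 2 = 1` would turn the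
norm into `4 * Y * (S + Y * (1 + 4 * D)) = (4 * D + 1) ^ (2 * μ) - 1`, whose right-hand side is
divisible by one more power of `2` than its left-hand side. -/
theorem oddPow_sq_ne_one {μ : ℕ} (hμ : 0 < μ) (hμ2 : Even μ) : (oddPow (4 * D) 1 μ).1 ^ 2 ≠ 1 := by
  intro hS
  obtain ⟨k, n, hn, rfl⟩ := Nat.exists_eq_two_pow_mul_odd hμ.ne'
  obtain ⟨w, hw, hY⟩ := exists_odd_evenPow_two_pow_mul D hn k
  have hSX := (oddPow_eq_evenPow (4 * D) (2 ^ k * n)).1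
  have hnorm := evenPow_norm (4 * D) (2 ^ k * n)
  have hYeven : Even (evenPow (4 * D) (2 ^ k * n)).2 :=
    Int.not_odd_iff_even.1 fun h =>
      Nat.not_even_iff_odd.2 ((evenPow_parity D _).2.1 h) hμ2
  have hSodd : Odd (oddPow (4 * D) 1 (2 ^ k * n)).1 :=
    (Int.odd_pow' two_ne_zero).1 (by rw [hS]; exact odd_one)
  generalize (evenPow (4 * D) (2 ^ k * n)).1 = X at *
  generalize (evenPow (4 * D) (2 ^ k * n)).2 = Y at *
  generalize (oddPow (4 * D) 1 (2 ^ k * n)).1 = S at *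
  have hodd : Odd (w * (S + Y * (1 + 4 * D))) :=
    hw.mul (hSodd.add_even (hYeven.mul_right _))
  have hdvd : (2 : ℤ) ^ (k + 2) * 2 ∣ 2 ^ (k + 2) * (w * (S + Y * (1 + 4 * D))) := by
    have heq : 2 ^ (k + 2) * (w * (S + Y * (1 + 4 * D))) =
        (4 * D + 1) ^ (2 * (2 ^ k * n)) - 1 := by
      rw [← hnorm, show X = S + 2 * Y by linarith]
      linear_combination -4 * (S + Y * (1 + 4 * D)) * hY - hS
    rw [heq, ← pow_succ]
    exact two_pow_dvd_pow_sub_one D n k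
  have htwo := Int.dvd_of_mul_dvd_mul_left (by positivity) hdvd
  exact Int.not_even_iff_odd.2 hodd (even_iff_two_dvd.2 htwo)

end EvenPow

section FourPowers

variable {p q i j e k r w z μ : ℕ}

theorem sq_add_four_ne_five_pow (hr : r % 4 = 3) (hr3 : r % 3 ≠ 0) : w ^ 2 + 4 ≠ 5 ^ r := by
  intro h
  have hmod (m : ℕ) : ((w % m) ^ 2 + 4) % m = 5 ^ r % m := by
    rw [← h, Nat.add_mod, ← Nat.pow_mod, ← Nat.add_mod]
  rcases (by lia : r % 12 = 7 ∨ r % 12 = 11) with hr12 | hr12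
  · have h73 : 5 ^ r % 73 = 5 ^ (r % 72) % 73 := pow_mod_eq_pow_mod_period (by norm_num) r
    have h19 : 5 ^ r % 19 = 5 ^ (r % 9) % 19 := pow_mod_eq_pow_mod_period (by norm_num) r
    have key : ∀ R ∈ [7, 19, 31, 43, 55, 67], (∀ t < 73, (t ^ 2 + 4) % 73 ≠ 5 ^ R % 73) ∨
      (∀ t < 19, (t ^ 2 + 4) % 19 ≠ 5 ^ (R % 9) % 19) := by decide +kernel
    have hR : r % 72 ∈ [7, 19, 31, 43, 55, 67] := by
      simp only [List.mem_cons, List.not_mem_nil, or_false]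
      lia
    rcases key _ hR with hne | hne
    · exact hne _ (Nat.mod_lt _ (by norm_num)) ((hmod 73).trans h73)
    · exact hne _ (Nat.mod_lt w (by norm_num))
        (by rw [hmod, h19, Nat.mod_mod_of_dvd r (by norm_num)])
  · have h7 : 5 ^ r % 7 = 5 ^ (r % 6) % 7 := pow_mod_eq_pow_mod_period (by norm_num) r
    rw [show r % 6 = 5 by lia, ← hmod] at h7
    have hw : w % 7 < 7 := Nat.mod_lt _ (by norm_num)
    interval_cases w % 7 <;> lia

theorem four_pow_add_sq_ne_of_even (hi : Even i) (hμ : Odd μ) :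
    4 ^ i + w ^ 2 ≠ (4 ^ i + 1) ^ (2 * μ + 1) := by
  intro h
  have hi5 : 4 ^ i % 5 = 1 % 5 := pow_mod_of_even (by norm_num) hi
  have hpow : (4 ^ i + 1) ^ (2 * μ + 1) % 5 = 3 := by
    rw [Nat.pow_mod, Nat.add_mod, hi5]
    norm_num
    rw [pow_mod_eq_pow_mod_period (T := 4) (by norm_num), show (2 * μ + 1) % 4 = 3 by grind]
    rfl
  have hw5 : w ^ 2 % 5 = (w % 5) ^ 2 % 5 := Nat.pow_mod w 2 5
  have hw : w % 5 < 5 := Nat.mod_lt _ (by norm_num)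
  interval_cases w % 5 <;> lia

theorem eq_five_of_four_pow_add_one (hq : q.Prime) (hi0 : 0 < i) (hi : Odd i) (he : Odd e)
    (h : 4 ^ i + 1 = q ^ e) : i = 1 ∧ q = 5 := by
  have hi5 : 4 ^ i % 5 = 4 % 5 := pow_mod_of_odd (by norm_num) hi
  obtain rfl : 5 = q := Nat.prime_eq_prime_of_dvd_pow (m := e) Nat.prime_five hq (by lia)
  refine ⟨?_, rfl⟩
  have he8 : 5 ^ e % 8 = 5 % 8 := pow_mod_of_odd (by norm_num) he
  by_contra hi1
  obtain ⟨i, rfl⟩ := Nat.exists_eq_add_of_le' (show 2 ≤ i by lia)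
  lia

theorem eq_eleven_of_four_pow_add_sq (hq : q.Prime) (hi : 0 < i) (he : Odd e)
    (hr : (2 * μ + 1).Prime) (hμ : Odd μ) (hbase : 4 ^ i + 1 = q ^ e)
    (h : 4 ^ i + (p ^ j) ^ 2 = (4 ^ i + 1) ^ (2 * μ + 1)) : p = 11 ∧ q = 5 := by
  rcases Nat.even_or_odd i with hi2 | hi2
  · exact absurd h (four_pow_add_sq_ne_of_even hi2 hμ)
  obtain ⟨rfl, rfl⟩ := eq_five_of_four_pow_add_one hq hi hi2 he hbase
  norm_num at h
  refine ⟨?_, rfl⟩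
  by_cases hr3 : (2 * μ + 1) % 3 = 0
  · rw [← (Nat.prime_dvd_prime_iff_eq Nat.prime_three hr).1 (Nat.dvd_of_mod_eq_zero hr3)] at h
    have hpj : p ^ j = 11 := Nat.pow_left_injective two_ne_zero (show (p ^ j) ^ 2 = 11 ^ 2 by lia)
    exact ((Nat.Prime.pow_eq_iff (by norm_num)).1 hpj).1
  · exact absurd (by lia) (sq_add_four_ne_five_pow (w := p ^ j) (show (2 * μ + 1) % 4 = 3 by grind)
      hr3)

theorem primeForm_four_one (hq : q.Prime) (hq2 : q ≠ 2) : PrimeForm 4 1 q 1 where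
  a_pos := by norm_num
  b_pos := by norm_num
  prime := Nat.prime_iff_prime_int.1 hq
  c_pos := by exact_mod_cast hq.pos
  not_dvd_a := not_dvd_prime_pow hq Nat.prime_two hq2 2
  not_dvd_b := (Nat.prime_iff_prime_int.1 hq).not_dvd_one
  scale := by lia
  sq_lt := by norm_num

theorem exists_four_mul_sq_add_sq_eq (hq : q.Prime) (hq4 : q % 4 = 1) :
    ∃ U V : ℤ, 4 * U ^ 2 + 1 * V ^ 2 = q := by
  have := Fact.mk hq
  obtain ⟨a, b, hab⟩ := Nat.Prime.sq_add_sq (p := q) (by lia)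
  have hab' : (a : ℤ) ^ 2 + (b : ℤ) ^ 2 = q := by exact_mod_cast hab
  rcases sq_emod_two a with ⟨⟨a', ha'⟩, -⟩ | ha
  · exact ⟨a', b, by rw [← hab', ha']; ring⟩
  · rcases sq_emod_two b with ⟨⟨b', hb'⟩, -⟩ | hb
    · exact ⟨b', a, by rw [← hab', hb']; ring⟩
    · lia

theorem eq_eleven_of_oddPow {u P : ℤ} (hq : q.Prime) (hk : Odd k)
    (hr : (2 * μ + 1).Prime) (huP : (2 : ℤ) ^ i = u * P)
    (hbase : 4 * u ^ 2 + 1 = (q : ℤ) ^ k) (hP : (oddPow (4 * u ^ 2) 1 μ).1 = P)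
    (h : 4 ^ (i + 1) + (p ^ j) ^ 2 = q ^ (k * (2 * μ + 1))) : p = 11 ∧ q = 5 := by
  have hPodd : ¬(2 : ℤ) ∣ P := by
    rw [← hP, (oddPow_eq_evenPow _ _).1, dvd_sub_left (dvd_mul_right _ _), ← even_iff_two_dvd,
      Int.not_even_iff_odd]
    exact (evenPow_parity (u ^ 2) μ).1
  have hP1 : P ^ 2 = 1 := sq_eq_one_of_dvd_prime_pow (p := 2) (i := i) Nat.prime_two
    (Dvd.intro_left _ huP.symm) hPodd
  have hu : 4 * u ^ 2 = 4 ^ (i + 1) := by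
    calc 4 * u ^ 2 = 4 * (u * P) ^ 2 := by rw [mul_pow, hP1, mul_one]
      _ = 4 * (2 ^ 2) ^ i := by rw [← huP, pow_right_comm]
      _ = 4 ^ (i + 1) := by ring
  have hμ : Odd μ := by
    by_contra hμ
    have hμ0 : 0 < μ := Nat.pos_of_ne_zero fun h0 => Nat.not_prime_one (by simpa [h0] using hr)
    exact oddPow_sq_ne_one (u ^ 2) hμ0 (Nat.not_odd_iff_even.1 hμ) (by rw [hP, hP1])
  have hbase' : 4 ^ (i + 1) + 1 = q ^ k := by
    rw [hu] at hbase
    exact_mod_cast hbase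
  exact eq_eleven_of_four_pow_add_sq (j := j) hq i.succ_pos hk hr hμ hbase'
    (by rw [hbase', ← pow_mul q, ← h])

theorem eq_eleven_or_isExceptional (hp : p.Prime) (hq : q.Prime) (hp2 : p ≠ 2) (hpq : p ≠ q)
    (hq4 : q % 4 = 1) (hz : Odd z) (hz1 : 1 < z)
    (h : 4 ^ (i + 1) + (p ^ j) ^ 2 = q ^ z) : p = 11 ∧ q = 5 ∨ IsExceptional 2 p q := by
  have hq2 : q ≠ 2 := by lia
  obtain ⟨U, V, hUV⟩ := exists_four_mul_sq_add_sq_eq hq hq4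
  have hZ : 4 * ((2 : ℤ) ^ i) ^ 2 + 1 * (p ^ j) ^ 2 = 1 ^ 2 * q ^ z := by
    have h' : (4 : ℤ) ^ (i + 1) + (p ^ j) ^ 2 = q ^ z := by exact_mod_cast h
    rw [one_pow, one_mul, one_mul, ← h', pow_right_comm]
    ring
  obtain ⟨μ, k, u, v, P, Q, hr, rfl, hsum, hu, hv, hS, hT⟩ :=
    (primeForm_four_one hq hq2).exists_prime_power (Or.inl hz) hZ
      (not_dvd_prime_pow hq Nat.prime_two hq2 i) (Or.inl odd_one)
      (show 4 * U ^ 2 + 1 * V ^ 2 = 1 ^ 2 * (q : ℤ) ^ 1 by rw [hUV]; ring) hz1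
  obtain ⟨s, hs⟩ := exists_sq_eq_pow_sq (i := i) (P := u) Nat.prime_two (Dvd.intro _ hu.symm)
  obtain ⟨t, ht⟩ := exists_sq_eq_pow_sq hp (Dvd.intro _ hv.symm)
  have hk := (Nat.odd_mul.1 hz).1
  rcases Nat.eq_zero_or_pos t with rfl | ht0
  · simp only [ht, pow_zero, one_pow, one_mul, mul_one] at hsum hS
    exact Or.inl (eq_eleven_of_oddPow hq hk hr hu hsum hS h)
  · have hu2 : 4 * u ^ 2 = ((2 : ℕ) : ℤ) ^ (2 + 2 * s) := by
      rw [hs]; push_cast; ring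
    have hv2 : 1 * v ^ 2 = (p : ℤ) ^ (2 * t) := by rw [ht]; ring
    rw [hu2, hv2] at hsum hS hT
    exact Or.inr (PrimeTriple.isExceptional_of_oddPow
      ⟨Nat.prime_two, hp, hq, hp2.symm, hq2.symm, hpq, Or.inl ⟨rfl, Or.inl rfl⟩⟩
      (by lia) (by lia) hk.pos hr hsum (Dvd.intro_left _ hu.symm) (Dvd.intro_left _ hv.symm)
      hS.symm hT.symm)

end FourPowers

/-! ### The case `a = 2` -/

section PrimeModThree

variable {p q n : ℕ}

theorem pow_mod_three_of_even (hp : p.Prime) (hp3 : p ≠ 3) (hn : Even n) : p ^ n % 3 = 1 :=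
  pow_mod_of_even (sq_mod_three_of_ne_zero fun h =>
    hp3 (eq_three_of_pow_mod_three hp (n := 1) (by rwa [pow_one]))) hn

theorem three_pow_mod_three (hn : 0 < n) : 3 ^ n % 3 = 0 :=
  Nat.mod_eq_zero_of_dvd (dvd_pow_self 3 hn.ne')

theorem pow_mod_three_of_odd (hn : Odd n) : p ^ n % 3 = p % 3 := by
  by_cases h : p % 3 = 0
  · rw [Nat.pow_mod, h, zero_pow hn.pos.ne', Nat.zero_mod]
  · exact pow_mod_of_odd (sq_mod_three_of_ne_zero h) hn

theorem odd_and_mod_three_of_pow_mod_three_eq_two (hp : p.Prime) (hn : 0 < n)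
    (h : p ^ n % 3 = 2) : Odd n ∧ p % 3 = 2 := by
  have hp3 : p ≠ 3 := by
    rintro rfl
    have := three_pow_mod_three hn
    lia
  have hodd : Odd n := by
    by_contra hn
    have := pow_mod_three_of_even hp hp3 (Nat.not_odd_iff_even.1 hn)
    lia
  exact ⟨hodd, by rwa [pow_mod_three_of_odd hodd] at h⟩

end PrimeModThree

theorem IsSolution.left_even {a b c x y z : ℕ} (S : IsSolution a b c x y z) (hb : Odd b)
    (hc : Odd c) : Even a := by
  have hsum : Odd (a ^ x + b ^ y) := S.2.2.2 ▸ hc.pow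
  exact (Nat.even_pow.1 ((Nat.odd_add'.1 hsum).1 hb.pow)).1

/-- Distinct odd primes `p`, `q` such that `(2, p, q)` is none of the exceptional triples of the
theorem. -/
structure OrdinaryPair (p q : ℕ) : Prop where
  prime_left : p.Prime
  prime_right : q.Prime
  left_ne_two : p ≠ 2
  right_ne_two : q ≠ 2
  ne : p ≠ q
  not_exceptional : (p, q) ∉ ({(3, 5), (3, 11), (5, 3), (7, 3)} : Finset (ℕ × ℕ))

namespace OrdinaryPair

variable {p q x y z x' y' z' : ℕ}

theorem primeTriple (O : OrdinaryPair p q) : PrimeTriple 2 p q 1 :=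
  ⟨Nat.prime_two, O.prime_left, O.prime_right, O.left_ne_two.symm, O.right_ne_two.symm, O.ne,
    Or.inl ⟨rfl, Or.inl rfl⟩⟩

theorem not_isExceptional (O : OrdinaryPair p q) : ¬IsExceptional 2 p q := by
  have := O.not_exceptional
  have := O.right_ne_two
  simp_all [IsExceptional]

theorem odd_of_even (O : OrdinaryPair p q) (S : IsSolution 2 p q x y z) (hy : Even y) :
    Odd z := by
  by_contra hz
  have := O.not_exceptional
  rcases S.bases_of_even_even O.prime_left O.prime_right O.left_ne_two O.right_ne_two hy
    (Nat.not_odd_iff_even.1 hz) with ⟨rfl, rfl⟩ | ⟨rfl, rfl⟩ <;> simp at this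

theorem of_even_even (O : OrdinaryPair p q) (S : IsSolution 2 p q x y z) (hx : Even x)
    (hy : Even y) : q % 4 = 1 ∧ (p = 3 → q % 3 = 1) ∧ (p ≠ 3 → q % 3 = 2) := by
  have hz := O.odd_of_even S hy
  obtain ⟨hx0, hy0, -, h⟩ := S
  have two_pow := pow_mod_three_of_even Nat.prime_two (by decide) hx
  have right_pow := pow_mod_three_of_odd (p := q) hz
  refine ⟨?_, ?_, fun hp3 => ?_⟩
  · have four_dvd : 4 ∣ 2 ^ x := pow_dvd_pow 2 (Nat.le_of_dvd hx0 hx.two_dvd)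
    have := pow_mod_of_even (sq_mod_eight_of_odd (O.prime_left.odd_of_ne_two O.left_ne_two)) hy
    have := pow_mod_of_odd (sq_mod_eight_of_odd (O.prime_right.odd_of_ne_two O.right_ne_two)) hz
    lia
  · rintro rfl
    have := three_pow_mod_three hy0
    lia
  · have := pow_mod_three_of_even O.prime_left hp3 hy
    lia

theorem of_even_odd_three (O : OrdinaryPair 3 q) (S : IsSolution 2 3 q x y z) (hx : Even x)
    (hy : Odd y) : q % 3 = 1 ∧ q % 4 = 3 := by
  have hz : Odd z := by
    by_contra hz
    have := S.bases_of_even_odd_even Nat.prime_three O.prime_right O.left_ne_two hx hy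
      (Nat.not_odd_iff_even.1 hz)
    lia
  obtain ⟨hx0, hy0, -, h⟩ := S
  have four_dvd : 4 ∣ 2 ^ x := pow_dvd_pow 2 (Nat.le_of_dvd hx0 hx.two_dvd)
  have := pow_mod_of_odd (w := 3) (m := 8) (by norm_num) hy
  have := pow_mod_of_odd (sq_mod_eight_of_odd (O.prime_right.odd_of_ne_two O.right_ne_two)) hz
  have := pow_mod_three_of_even Nat.prime_two (by decide) hx
  have := pow_mod_three_of_odd (p := q) hz
  have := three_pow_mod_three hy0
  lia

theorem of_even_odd (O : OrdinaryPair p q) (S : IsSolution 2 p q x y z) (hx : Even x)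
    (hy : Odd y) : (p % 3 = 2 → q = 3) ∧ (p % 3 = 1 → q % 3 = 2) := by
  obtain ⟨-, -, hz0, h⟩ := S
  have := pow_mod_three_of_even Nat.prime_two (by decide) hx
  have := pow_mod_three_of_odd (p := p) hy
  exact ⟨fun hp => eq_three_of_pow_mod_three O.prime_right (n := z) (by lia), fun hp =>
    (odd_and_mod_three_of_pow_mod_three_eq_two O.prime_right hz0 (by lia)).2⟩

theorem of_odd_even (O : OrdinaryPair p q) (S : IsSolution 2 p q x y z) (hx : Odd x)
    (hy : Even y) : p = 3 ∧ Odd z ∧ q % 3 = 2 := by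
  have hne := O.not_exceptional
  obtain rfl : p = 3 := by
    by_contra hp3
    rcases S.bases_of_odd_even O.prime_left O.prime_right O.left_ne_two hp3 hx hy with
      ⟨rfl, rfl⟩ | ⟨rfl, rfl⟩ <;> simp at hne
  obtain ⟨-, hy0, hz0, h⟩ := S
  have := three_pow_mod_three hy0
  have := pow_mod_three_of_odd (p := 2) hx
  exact ⟨rfl, odd_and_mod_three_of_pow_mod_three_eq_two O.prime_right hz0 (by lia)⟩

theorem of_odd_odd (O : OrdinaryPair p q) (S : IsSolution 2 p q x y z) (hx : Odd x)
    (hy : Odd y) :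
    (p = 3 → Odd z ∧ q % 3 = 2) ∧ (p % 3 = 2 → q ≠ 3) ∧ (p % 3 = 1 → q = 3) := by
  obtain ⟨-, -, hz0, h⟩ := S
  have := pow_mod_three_of_odd (p := 2) hx
  have := pow_mod_three_of_odd (p := p) hy
  refine ⟨?_, ?_, fun hp => eq_three_of_pow_mod_three O.prime_right (n := z) (by lia)⟩
  · rintro rfl
    exact odd_and_mod_three_of_pow_mod_three_eq_two O.prime_right hz0 (by lia)
  · rintro hp rfl
    have := three_pow_mod_three hz0
    lia

theorem left_mod_three (O : OrdinaryPair p q) : p = 3 ∨ p % 3 = 1 ∨ p % 3 = 2 := by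
  have : p % 3 = 0 → p = 3 := fun h =>
    eq_three_of_pow_mod_three O.prime_left (n := 1) (by rwa [pow_one])
  lia

theorem false_of_even_odd_of_odd_odd (O : OrdinaryPair p q) (S : IsSolution 2 p q x y z)
    (hx : Even x) (hy : Odd y) (S' : IsSolution 2 p q x' y' z') (hx' : Odd x') (hy' : Odd y') :
    False := by
  have h := O.of_even_odd S hx hy
  have h' := O.of_odd_odd S' hx' hy'
  rcases O.left_mod_three with rfl | hp | hp
  · have := O.of_even_odd_three S hx hy
    lia
  all_goals lia

theorem odd_even_of_odd_even (O : OrdinaryPair p q) (S : IsSolution 2 p q x y z)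
    (hx : Odd x) (hy : Even y) (S' : IsSolution 2 p q x' y' z') : Odd x' ∧ Even y' := by
  obtain ⟨rfl, hz, hq⟩ := O.of_odd_even S hx hy
  rcases Nat.even_or_odd x' with hx' | hx' <;> rcases Nat.even_or_odd y' with hy' | hy'
  · have := (O.of_even_even S' hx' hy').2.1 rfl
    lia
  · have := O.of_even_odd_three S' hx' hy'
    lia
  · exact ⟨hx', hy'⟩
  · have hq11 : q ≠ 11 := by
      rintro rfl
      simpa using O.not_exceptional
    exact (S.false_of_two_three O.prime_right O.right_ne_two O.ne.symm hq11 hx hy hz hx' hy'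
      ((O.of_odd_odd S' hx' hy').1 rfl).1 S').elim

theorem eq_of_parity_eq (O : OrdinaryPair p q) (S : IsSolution 2 p q x y z)
    (S' : IsSolution 2 p q x' y' z') (hx : Even x ↔ Even x') (hy : Even y ↔ Even y') :
    x = x' ∧ y = y' ∧ z = z' := by
  obtain ⟨hx0, hy0, hz0, h⟩ := S
  obtain ⟨hx0', hy0', hz0', h'⟩ := S'
  refine O.primeTriple.eq_of_parity_eq O.not_isExceptional hx0 hy0 hx0' hy0' hz0 hz0' hx hy ?_ ?_
  · rw [one_pow, one_mul]
    exact_mod_cast h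
  · rw [one_pow, one_mul]
    exact_mod_cast h'

theorem parity_of_ne (O : OrdinaryPair p q) (S : IsSolution 2 p q x y z)
    (S' : IsSolution 2 p q x' y' z') (hne : ¬(x = x' ∧ y = y' ∧ z = z')) :
    Even x ∧ Even y ∧ Odd y' ∨ Even x' ∧ Even y' ∧ Odd y := by
  have hparity := mt (fun h : (Even x ↔ Even x') ∧ (Even y ↔ Even y') =>
    O.eq_of_parity_eq S S' h.1 h.2) hne
  have := fun hx hy => O.odd_even_of_odd_even S hx hy S'
  have := fun hx' hy' => O.odd_even_of_odd_even S' hx' hy' S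
  have := fun hx hy hx' hy' => O.false_of_even_odd_of_odd_odd S hx hy S' hx' hy'
  have := fun hx hy hx' hy' => O.false_of_even_odd_of_odd_odd S' hx' hy' S hx hy
  grind

theorem not_eleven_five (O : OrdinaryPair p q) (S : IsSolution 2 p q x y z) (hy : Odd y) :
    ¬(p = 11 ∧ q = 5) := by
  rintro ⟨rfl, rfl⟩
  rcases Nat.even_or_odd x with hx | hx
  · have := (O.of_even_odd S hx hy).1
    lia
  · obtain ⟨-, -, hz0, h⟩ := S
    have eleven_pow : 11 ^ y % 5 = 1 := by simp [Nat.pow_mod]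
    have two_pow := pow_mod_eq_pow_mod_period (a := 2) (T := 4) (m := 5) (by norm_num) x
    have five_dvd : 5 ∣ 5 ^ z := dvd_pow_self 5 hz0.ne'
    have := Nat.odd_iff.1 hx
    rcases (by lia : x % 4 = 1 ∨ x % 4 = 3) with hx4 | hx4 <;> norm_num [hx4] at two_pow <;> lia

theorem mod_twelve_eq_five (O : OrdinaryPair p q) (S : IsSolution 2 p q x y z)
    (hx : Even x) (hy : Even y) (S' : IsSolution 2 p q x' y' z') (hy' : Odd y') :
    q % 12 = 5 := by
  have ⟨hq4, hq_three, hq⟩ := O.of_even_even S hx hy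
  have hp3 : p ≠ 3 := by
    rintro rfl
    rcases Nat.even_or_odd x' with hx' | hx'
    · have := O.of_even_odd_three S' hx' hy'
      lia
    · have := (O.of_odd_odd S' hx' hy').1 rfl
      lia
  lia

theorem exponent_eq_one (O : OrdinaryPair p q) (S : IsSolution 2 p q x y z)
    (hx : Even x) (hy : Even y) (hpq : ¬(p = 11 ∧ q = 5)) : z = 1 := by
  have hz := O.odd_of_even S hy
  have hq4 := (O.of_even_even S hx hy).1
  obtain ⟨hx0, -, hz0, h⟩ := S
  obtain ⟨k, rfl⟩ := hx.two_dvd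
  obtain ⟨i, rfl⟩ : ∃ i, k = i + 1 := ⟨k - 1, by lia⟩
  obtain ⟨j, rfl⟩ := hy.two_dvd
  have hsq : 4 ^ (i + 1) + (p ^ j) ^ 2 = q ^ z := by
    rw [← h, pow_mul, ← pow_mul', show 2 ^ 2 = 4 from rfl]
  by_contra hz1
  exact (eq_eleven_or_isExceptional O.prime_left O.prime_right O.left_ne_two O.ne hq4 hz
    (by lia) hsq).elim hpq O.not_isExceptional

theorem eq_or_eq (O : OrdinaryPair p q) (S : IsSolution 2 p q x y z) (hx : Even x)
    (hy : Even y) (S' : IsSolution 2 p q x' y' z') (hy' : Odd y') {u v w : ℕ}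
    (U : IsSolution 2 p q u v w) : (u, v, w) = (x, y, z) ∨ (u, v, w) = (x', y', z') := by
  by_contra! hne
  simp only [ne_eq, Prod.mk.injEq] at hne
  have := O.parity_of_ne U S hne.1
  have := O.parity_of_ne U S' hne.2
  grind

end OrdinaryPair

/-- Theorem 1.4: For distinct primes `a < b < c` (well, `a < b`) with more than one
solution of `a^x + b^y = c^z` and `(a,b,c)` not an exceptional triple,
`c ≡ 5 mod 12` and there are exactly two solutions with the stated parity properties. -/
theorem stmt_1 (a b c : ℕ) (ha : Nat.Prime a) (hb : Nat.Prime b) (hc : Nat.Prime c)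
    (hab : a < b) (hac : a ≠ c) (hbc : b ≠ c)
    (hmany : ∃ s t : ℕ × ℕ × ℕ, s ≠ t ∧
        (0 < s.1 ∧ 0 < s.2.1 ∧ 0 < s.2.2 ∧ a ^ s.1 + b ^ s.2.1 = c ^ s.2.2) ∧
        (0 < t.1 ∧ 0 < t.2.1 ∧ 0 < t.2.2 ∧ a ^ t.1 + b ^ t.2.1 = c ^ t.2.2))
    (hexc : (a, b, c) ≠ (2, 3, 5) ∧ (a, b, c) ≠ (2, 3, 11) ∧ (a, b, c) ≠ (2, 5, 3) ∧
        (a, b, c) ≠ (2, 7, 3) ∧ (a, b, c) ≠ (3, 5, 2) ∧ (a, b, c) ≠ (3, 13, 2)) :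
    c % 12 = 5 ∧
    (∃ x₁ y₁ z₁ x₂ y₂ z₂ : ℕ,
        (0 < x₁ ∧ 0 < y₁ ∧ 0 < z₁ ∧ a ^ x₁ + b ^ y₁ = c ^ z₁) ∧
        (0 < x₂ ∧ 0 < y₂ ∧ 0 < z₂ ∧ a ^ x₂ + b ^ y₂ = c ^ z₂) ∧
        (x₁, y₁, z₁) ≠ (x₂, y₂, z₂) ∧
        (∀ x y z : ℕ, 0 < x → 0 < y → 0 < z → a ^ x + b ^ y = c ^ z →
          (x, y, z) = (x₁, y₁, z₁) ∨ (x, y, z) = (x₂, y₂, z₂)) ∧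
        2 ∣ x₁ ∧ 2 ∣ y₁ ∧ z₁ = 1 ∧ ¬ (2 ∣ y₂)) := by
  obtain ⟨⟨x, y, z⟩, ⟨x', y', z'⟩, hne, S, S'⟩ := hmany
  change IsSolution a b c x y z at S
  change IsSolution a b c x' y' z' at S'
  simp only [ne_eq, Prod.mk.injEq] at hne hexc
  have hb2 : b ≠ 2 := (ha.two_le.trans_lt hab).ne'
  rcases eq_or_ne c 2 with rfl | hc2
  · have hex : ¬IsExceptional a b 2 := by
      simp only [IsExceptional, Finset.mem_insert, Finset.mem_singleton, Prod.mk.injEq]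
      lia
    exact (hne (S.eq_of_base_two ha hb hab.ne hac hb2 hex S')).elim
  obtain rfl : a = 2 := ha.even_iff.1 (S.left_even (hb.odd_of_ne_two hb2) (hc.odd_of_ne_two hc2))
  have O : OrdinaryPair b c := ⟨hb, hc, hb2, hc2, hbc, by
    simp only [Finset.mem_insert, Finset.mem_singleton, Prod.mk.injEq]
    lia⟩
  wlog hparity : Even x ∧ Even y ∧ Odd y' generalizing x y z x' y' z'
  · exact this x' y' z' x y z (by lia) S' S ((O.parity_of_ne S S' hne).resolve_left hparity)
  obtain ⟨hx, hy, hy'⟩ := hparity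
  have hz : z = 1 := O.exponent_eq_one S hx hy (O.not_eleven_five S' hy')
  refine ⟨O.mod_twelve_eq_five S hx hy S' hy', x, y, z, x', y', z', S, S', ?_, ?_,
    hx.two_dvd, hy.two_dvd, hz, hy'.not_two_dvd_nat⟩
  · simpa only [ne_eq, Prod.mk.injEq] using hne
  · exact fun u v w hu hv hw huvw => O.eq_or_eq S hx hy S' hy' ⟨hu, hv, hw, huvw⟩
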